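/- arXiv:1805.09100 — 6 statements merged into one kernel-verified Lean document; each statement's English description precedes it below -/
import Mathlib

section
/- Let Ω = [0,1)^N and for each α ⊆ {1,...,N} let A_α(k, x_α) be a real-valued kernel with bounded first derivatives (bounded gradient). Let 𝒜_c : L²(Ω) → L²(Ω) be the multi-kernel operator 𝒜_c u(k) = ∑_{α⊆{1,...,N}} ∫_{[0,1)^{|α|}} A_α(k, x_α) u(k_ᾱ + x_α) dx_α, and for p ≥ 1 let 𝒜 = ∑_{α⊆{1,...,N}} ∑_{i,j=1}^{p^N} p^{−|α|} 𝓔_{ij}^α[A_{ij}^α] be its midpoint discretization with piecewise constant kernels, where A_{ij}^α = A_α(a_i + ε, (a_j + ε)_α) if (a_i)_ᾱ = (a_j)_ᾱ and A_{ij}^α = 0 otherwise, with ε = (1/(2p),...,1/(2p)). Then ‖𝒜_c − 𝒜‖_{L²→L²} ≤ (N/(2p)) ∑_{α⊆{1,...,N}} ‖∇A_α‖_{L^∞}, and in particular ‖𝒜_c − 𝒜‖_{L²→L²} → 0 as p → ∞. -/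
/-!
STATEMENT 14: Midpoint discretization of a multi-kernel integral operator on
L²([0,1)^N): if the kernels A_α have bounded first derivatives then
‖𝒜_c − 𝒜‖_{L²→L²} ≤ (N/(2p)) ∑_α ‖∇A_α‖_{L^∞} → 0 as p → ∞.
-/

open MeasureTheory Finset

noncomputable section

namespace Stmt14

/-- The half-open cube `[0,h)^N`. -/
def cube (N : ℕ) (h : ℝ) : Set (Fin N → ℝ) := Set.univ.pi fun _ => Set.Ico 0 h

/-- `x_α`: the vector whose `n`-th coordinate is `x n` for `n ∈ α` and `0` for
`n ∉ α`. -/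
def proj {N : ℕ} (α : Finset (Fin N)) (x : Fin N → ℝ) : Fin N → ℝ :=
  fun n => if n ∈ α then x n else 0

/-- `k_ᾱ + x_α`: the point whose coordinates in `α` come from `x` and whose
coordinates outside `α` come from `k`. -/
def combine {N : ℕ} (α : Finset (Fin N)) (x k : Fin N → ℝ) : Fin N → ℝ :=
  fun n => if n ∈ α then x n else k n

/-- The pointwise formula of the multi-kernel operator
`𝒜_c u(k) = ∑_α ∫_{[0,1)^{|α|}} A_α(k, x_α) u(k_ᾱ + x_α) dx_α`.  The partial
integral over the coordinates in `α` is realized as an integral over the whole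
unit cube: the integrand depends only on the coordinates of `x` in `α`, and the
remaining coordinates range over `[0,1)`, contributing a factor `1` each. -/
def AcFun {N : ℕ} (A : Finset (Fin N) → (Fin N → ℝ) → (Fin N → ℝ) → ℝ)
    (u : (Fin N → ℝ) → ℂ) : (Fin N → ℝ) → ℂ :=
  fun k => ∑ α : Finset (Fin N),
    ∫ x in cube N 1, (A α k (proj α x) : ℂ) * u (combine α x k)

/-- `‖∇A_α‖_{L^∞}`: the supremum norm of the (total) derivative of the kernel
`A_α`, as a function of the joint variable `(k, x)`. -/
def gradNorm {N : ℕ} (A : Finset (Fin N) → (Fin N → ℝ) → (Fin N → ℝ) → ℝ)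
    (α : Finset (Fin N)) : ℝ :=
  ⨆ q : (Fin N → ℝ) × (Fin N → ℝ),
    ‖fderiv ℝ (fun q : (Fin N → ℝ) × (Fin N → ℝ) => A α q.1 q.2) q‖

/-- The vertex `a_i = 𝐛/p` of a subcube of the uniform partition of `[0,1)^N`
into `p^N` subcubes; the subcubes are indexed by their digit vectors
`𝐛 ∈ {0,...,p−1}^N` (the base-`p` digits of `i − 1`). -/
def aV {N : ℕ} (p : ℕ) (b : Fin N → Fin p) : Fin N → ℝ := fun n => (b n : ℝ) / p

/-- The midpoint shift `ε = (1/(2p),...,1/(2p))`. -/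
def epsV (N p : ℕ) : Fin N → ℝ := fun _ => 1 / (2 * p)

/-- The subcube `Ω_i = a_i + [0,1/p)^N`. -/
def cubeAt {N : ℕ} (p : ℕ) (b : Fin N → Fin p) : Set (Fin N → ℝ) :=
  {x | x - aV p b ∈ cube N (1 / p)}

/-- The piecewise-constant coefficients
`A_{ij}^α = A_α(a_i + ε, (a_j + ε)_α)` if `(a_i)_ᾱ = (a_j)_ᾱ`, else `0`. -/
def coefA {N : ℕ} (A : Finset (Fin N) → (Fin N → ℝ) → (Fin N → ℝ) → ℝ)
    (p : ℕ) (α : Finset (Fin N)) (i j : Fin N → Fin p) : ℂ :=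
  if ∀ n ∉ α, i n = j n then
    (A α (aV p i + epsV N p) (proj α (aV p j + epsV N p)) : ℂ)
  else 0

/-- The pointwise formula of the scalar elementary operator `𝓔_{ij}^α[c]`
(with `h = 1/p`, `M = 1`):
`(𝓔_{ij}^α[c]u)(x + a_i) = p^{|α|} c ∫_{[0,1/p)^{|α|}} u(x' + a_j) dx'_α`, and
`0` outside `Ω_i`.  The partial integral over the coordinates in `α` is realized
as an integral over the whole cube `[0,1/p)^N` (the integrand does not depend on
the coordinates of `y` outside `α`), compensated by the additional
normalization `p^{N−|α|}`. -/
def EfunP {N : ℕ} (p : ℕ) (i j : Fin N → Fin p) (α : Finset (Fin N)) (c : ℂ)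
    (u : (Fin N → ℝ) → ℂ) : (Fin N → ℝ) → ℂ :=
  (cubeAt p i).indicator fun x =>
    ((p : ℂ) ^ α.card * (p : ℂ) ^ (N - α.card)) * c *
      ∫ y in cube N (1 / p), u (aV p j + combine α y (x - aV p i))

/-- The pointwise formula of the midpoint discretization
`𝒜 = ∑_α ∑_{i,j=1}^{p^N} p^{−|α|} 𝓔_{ij}^α[A_{ij}^α]`. -/
def AdFun {N : ℕ} (A : Finset (Fin N) → (Fin N → ℝ) → (Fin N → ℝ) → ℝ)
    (p : ℕ) (u : (Fin N → ℝ) → ℂ) : (Fin N → ℝ) → ℂ :=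
  fun x => ∑ α : Finset (Fin N), ∑ i : Fin N → Fin p, ∑ j : Fin N → Fin p,
    ((p : ℂ) ^ α.card)⁻¹ * EfunP p i j α (coefA A p α i j) u x

lemma measurableSet_cube (N : ℕ) (h : ℝ) : MeasurableSet (cube N h) :=
  MeasurableSet.univ_pi fun _ => measurableSet_Ico

lemma cubeAt_eq {N : ℕ} (p : ℕ) (b : Fin N → Fin p) :
    cubeAt p b = (fun x => x - aV p b) ⁻¹' cube N (1 / p) := rfl

lemma measurableSet_cubeAt {N : ℕ} (p : ℕ) (b : Fin N → Fin p) :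
    MeasurableSet (cubeAt p b) := by
  rw [cubeAt_eq]
  exact (measurable_id.sub_const _) (measurableSet_cube _ _)

lemma mem_cubeAt {N : ℕ} {p : ℕ} (hp : 1 ≤ p) (b : Fin N → Fin p) (x : Fin N → ℝ) :
    x ∈ cubeAt p b ↔ ∀ n, ((b n : ℕ) : ℝ) ≤ x n * p ∧ x n * p < (b n : ℕ) + 1 := by
  have hp' : (0 : ℝ) < p := by exact_mod_cast hp
  simp only [cubeAt, cube, aV, Set.mem_setOf_eq, Set.mem_univ_pi, Set.mem_Ico, Pi.sub_apply]
  refine forall_congr' fun n => and_congr ?_ ?_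
  · rw [sub_nonneg, div_le_iff₀ hp']
  · rw [sub_lt_iff_lt_add', ← add_div, lt_div_iff₀ hp']

lemma cubeAt_unique {N : ℕ} {p : ℕ} (hp : 1 ≤ p) (b c : Fin N → Fin p) (x : Fin N → ℝ)
    (hb : x ∈ cubeAt p b) (hc : x ∈ cubeAt p c) : b = c := by
  rw [mem_cubeAt hp] at hb hc
  funext n
  obtain ⟨h1, h2⟩ := hb n
  obtain ⟨h3, h4⟩ := hc n
  have h5 : ((b n : ℕ) : ℝ) < (c n : ℕ) + 1 := by linarith
  have h6 : ((c n : ℕ) : ℝ) < (b n : ℕ) + 1 := by linarith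
  norm_cast at h5 h6
  apply Fin.ext
  omega

lemma iUnion_cubeAt {N : ℕ} {p : ℕ} (hp : 1 ≤ p) :
    (⋃ b : Fin N → Fin p, cubeAt p b) = cube N 1 := by
  have hp' : (0 : ℝ) < p := by exact_mod_cast hp
  ext x
  simp only [Set.mem_iUnion, mem_cubeAt hp]
  simp only [cube, Set.mem_univ_pi, Set.mem_Ico]
  constructor
  · rintro ⟨b, hb⟩ n
    obtain ⟨h1, h2⟩ := hb n
    have h3 : ((b n : ℕ) : ℝ) + 1 ≤ p := by exact_mod_cast (b n).2
    constructor
    · by_contra! h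
      have := mul_neg_of_neg_of_pos h hp'
      have : (0 : ℝ) ≤ (b n : ℕ) := by positivity
      linarith
    · by_contra! h
      nlinarith
  · intro h
    have h0 : ∀ n, 0 ≤ x n * p := fun n => mul_nonneg (h n).1 hp'.le
    refine ⟨fun n => ⟨⌊x n * p⌋₊, ?_⟩, fun n => ⟨Nat.floor_le (h0 n), Nat.lt_floor_add_one _⟩⟩
    rw [Nat.floor_lt (h0 n)]
    nlinarith [(h n).2]

lemma mid_dist {N : ℕ} {p : ℕ} (b : Fin N → Fin p) (x : Fin N → ℝ)
    (hx : x ∈ cubeAt p b) (n : Fin N) : |x n - (aV p b + epsV N p) n| ≤ 1 / (2 * p) := by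
  have := hx n (Set.mem_univ n)
  simp only [Set.mem_Ico, Pi.sub_apply] at this
  have h2 : (1 : ℝ) / p = 1 / (2 * p) + 1 / (2 * p) := by
    have : (1 : ℝ) / (2 * p) = 1 / p / 2 := by rw [div_div, mul_comm]
    rw [this]; ring
  simp only [Pi.add_apply, epsV]
  rw [abs_le]
  constructor <;> linarith

lemma setIntegral_cubeAt {N : ℕ} (p : ℕ) (b : Fin N → Fin p) (f : (Fin N → ℝ) → ℂ) :
    ∫ x in cubeAt p b, f x = ∫ y in cube N (1 / p), f (aV p b + y) := by
  have := (measurePreserving_sub_right (volume : Measure (Fin N → ℝ)) (aV p b)).setIntegral_preimage_emb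
    (measurableEmbedding_subRight (aV p b)) (fun y => f (aV p b + y)) (cube N (1 / p))
  rw [← this, cubeAt_eq]
  simp

lemma kernel_lip {N : ℕ} (A : Finset (Fin N) → (Fin N → ℝ) → (Fin N → ℝ) → ℝ)
    (hdiff : ∀ α, Differentiable ℝ
      (fun q : (Fin N → ℝ) × (Fin N → ℝ) => A α q.1 q.2))
    (hbdd : ∀ α, ∃ C : ℝ, ∀ q : (Fin N → ℝ) × (Fin N → ℝ),
      ‖fderiv ℝ (fun q : (Fin N → ℝ) × (Fin N → ℝ) => A α q.1 q.2) q‖ ≤ C)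
    (α : Finset (Fin N)) (q r : (Fin N → ℝ) × (Fin N → ℝ)) :
    ‖A α q.1 q.2 - A α r.1 r.2‖ ≤ gradNorm A α * ‖q - r‖ := by
  obtain ⟨C, hC⟩ := hbdd α
  refine (convex_univ (𝕜 := ℝ)).norm_image_sub_le_of_norm_fderiv_le
    (f := fun q : (Fin N → ℝ) × (Fin N → ℝ) => A α q.1 q.2) (C := gradNorm A α)
    (fun x _ => hdiff α x) (fun x _ => ?_) (Set.mem_univ r) (Set.mem_univ q)
  exact le_ciSup (f := fun q => ‖fderiv ℝ (fun q : (Fin N → ℝ) × (Fin N → ℝ) => A α q.1 q.2) q‖)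
    ⟨C, by rintro _ ⟨q, rfl⟩; exact hC q⟩ x

lemma gradNorm_nonneg {N : ℕ} (A : Finset (Fin N) → (Fin N → ℝ) → (Fin N → ℝ) → ℝ)
    (α : Finset (Fin N)) : 0 ≤ gradNorm A α := Real.iSup_nonneg fun _ => norm_nonneg _

lemma kernel_mid {N : ℕ} (A : Finset (Fin N) → (Fin N → ℝ) → (Fin N → ℝ) → ℝ)
    (hdiff : ∀ α, Differentiable ℝ
      (fun q : (Fin N → ℝ) × (Fin N → ℝ) => A α q.1 q.2))
    (hbdd : ∀ α, ∃ C : ℝ, ∀ q : (Fin N → ℝ) × (Fin N → ℝ),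
      ‖fderiv ℝ (fun q : (Fin N → ℝ) × (Fin N → ℝ) => A α q.1 q.2) q‖ ≤ C)
    (α : Finset (Fin N)) (p : ℕ) (i j : Fin N → Fin p) (k x : Fin N → ℝ)
    (hk : k ∈ cubeAt p i) (hx : x ∈ cubeAt p j) :
    ‖A α k (proj α x) - A α (aV p i + epsV N p) (proj α (aV p j + epsV N p))‖
      ≤ gradNorm A α * (1 / (2 * p)) := by
  refine (kernel_lip A hdiff hbdd α (k, proj α x) (aV p i + epsV N p, proj α (aV p j + epsV N p))).trans ?_
  refine mul_le_mul_of_nonneg_left ?_ (gradNorm_nonneg A α)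
  have h0 : (0 : ℝ) ≤ 1 / (2 * p) := by positivity
  rw [Prod.norm_def]
  refine max_le ((pi_norm_le_iff_of_nonneg h0).2 fun n => ?_) ((pi_norm_le_iff_of_nonneg h0).2 fun n => ?_)
  · exact mid_dist i k hk n
  · have := mid_dist j x hx n
    simp only [Prod.snd_sub, Pi.sub_apply, proj]
    split_ifs
    · exact this
    · simpa using h0

lemma sum_fiber {N p : ℕ} (α : Finset (Fin N)) (i : Fin N → Fin p)
    (F : (Fin N → Fin p) → ℂ)
    (hF : ∀ j j' : Fin N → Fin p, (∀ n ∈ α, j n = j' n) → F j = F j') :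
    ∑ j, F j = ∑ j, if ∀ n ∉ α, i n = j n then (p : ℂ) ^ (N - α.card) * F j else 0 := by
  classical
  rw [← Finset.sum_filter]
  rw [← Finset.sum_fiberwise_of_maps_to (s := univ) (t := univ.filter fun j : Fin N → Fin p => ∀ n ∉ α, i n = j n)
    (g := fun j => α.piecewise j i) (f := F)]
  · refine Finset.sum_congr rfl fun j hj => ?_
    have hj' : ∀ n ∉ α, i n = j n := by simpa using hj
    have hset : (univ.filter fun j' : Fin N → Fin p => α.piecewise j' i = j)
        = Fintype.piFinset (fun n => if n ∈ α then {j n} else univ) := by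
      ext j'
      simp only [Finset.mem_filter, Finset.mem_univ, true_and, Fintype.mem_piFinset]
      constructor
      · rintro rfl n
        by_cases h : n ∈ α <;> simp [h]
      · intro h
        funext n
        by_cases hn : n ∈ α
        · simpa [hn] using h n
        · simp [hn, hj' n hn]
    rw [Finset.sum_congr rfl (g := fun _ => F j), Finset.sum_const, hset, Fintype.card_piFinset]
    · have : ∀ n, (if n ∈ α then ({j n} : Finset (Fin p)) else univ).card = if n ∈ α then 1 else p := by
        intro n; split_ifs <;> simp
      simp only [this]
      rw [Finset.prod_ite]
      have hc : (univ.filter fun n => n ∉ α).card = N - α.card := by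
        have : (univ.filter fun n => n ∉ α) = αᶜ := by ext n; simp
        rw [this, Finset.card_compl, Fintype.card_fin]
      simp [hc]
    · intro j' h
      apply hF
      intro n hn
      have : α.piecewise j' i = j := by simpa using h
      rw [← this]; simp [hn]
  · intro j _
    simp only [Finset.mem_filter, Finset.mem_univ, true_and]
    intro n hn
    simp [hn]

lemma Ad_term {N p : ℕ} (hp : 1 ≤ p) (A : Finset (Fin N) → (Fin N → ℝ) → (Fin N → ℝ) → ℝ)
    (α : Finset (Fin N)) (u : (Fin N → ℝ) → ℂ) (i : Fin N → Fin p) (k : Fin N → ℝ)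
    (hk : k ∈ cubeAt p i) :
    ∑ i' : Fin N → Fin p, ∑ j : Fin N → Fin p,
      ((p : ℂ) ^ α.card)⁻¹ * EfunP p i' j α (coefA A p α i' j) u k
    = ∑ j : Fin N → Fin p, ∫ x in cubeAt p j,
        (A α (aV p i + epsV N p) (proj α (aV p j + epsV N p)) : ℂ) * u (combine α x k) := by
  have hp' : (p : ℂ) ≠ 0 := by exact_mod_cast (by omega : p ≠ 0)
  rw [Finset.sum_eq_single i]
  rotate_left
  · intro i' _ hne
    refine Finset.sum_eq_zero fun j _ => ?_
    rw [EfunP, Set.indicator_of_notMem, mul_zero]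
    exact fun h => hne (cubeAt_unique hp _ _ _ h hk)
  · simp
  rw [sum_fiber α i (fun j => ∫ x in cubeAt p j,
        (A α (aV p i + epsV N p) (proj α (aV p j + epsV N p)) : ℂ) * u (combine α x k))]
  · refine Finset.sum_congr rfl fun j _ => ?_
    rw [EfunP, Set.indicator_of_mem hk, coefA]
    split_ifs with h
    · have : ∀ y, aV p j + combine α y (k - aV p i) = combine α (aV p j + y) k := by
        intro y
        funext n
        simp only [Pi.add_apply, combine, Pi.sub_apply]
        split_ifs with hn
        · rfl
        · simp [aV, h n hn]
      simp only [this]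
      rw [setIntegral_cubeAt, integral_const_mul]
      field_simp
    · simp
  · intro j j' h
    rw [setIntegral_cubeAt, setIntegral_cubeAt]
    have h1 : proj α (aV p j + epsV N p) = proj α (aV p j' + epsV N p) := by
      funext n
      simp only [proj]
      split_ifs with hn
      · simp [aV, h n hn]
      · rfl
    have h2 : ∀ y, combine α (aV p j + y) k = combine α (aV p j' + y) k := by
      intro y; funext n
      simp only [combine]
      split_ifs with hn
      · simp [aV, h n hn]
      · rfl
    simp only [h1, h2]

lemma term_bound {N p : ℕ} (hp : 1 ≤ p) (A : Finset (Fin N) → (Fin N → ℝ) → (Fin N → ℝ) → ℝ)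
    (hdiff : ∀ α, Differentiable ℝ
      (fun q : (Fin N → ℝ) × (Fin N → ℝ) => A α q.1 q.2))
    (hbdd : ∀ α, ∃ C : ℝ, ∀ q : (Fin N → ℝ) × (Fin N → ℝ),
      ‖fderiv ℝ (fun q : (Fin N → ℝ) × (Fin N → ℝ) => A α q.1 q.2) q‖ ≤ C)
    (α : Finset (Fin N)) (u : (Fin N → ℝ) → ℂ) (k : Fin N → ℝ) (hk : k ∈ cube N 1)
    (hint : IntegrableOn (fun x => u (combine α x k)) (cube N 1)) :
    ‖(∫ x in cube N 1, (A α k (proj α x) : ℂ) * u (combine α x k)) -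
      ∑ i' : Fin N → Fin p, ∑ j : Fin N → Fin p,
        ((p : ℂ) ^ α.card)⁻¹ * EfunP p i' j α (coefA A p α i' j) u k‖
    ≤ gradNorm A α * (1 / (2 * p)) * ∫ x in cube N 1, ‖u (combine α x k)‖ := by
  have hU := iUnion_cubeAt (N := N) hp
  obtain ⟨i, hi⟩ := Set.mem_iUnion.1 (hU ▸ hk)
  rw [Ad_term hp A α u i k hi]
  have hdisj : Pairwise (Function.onFun Disjoint fun b : Fin N → Fin p => cubeAt p b) := by
    intro b c hbc
    refine Set.disjoint_left.2 fun x hb hc => hbc (cubeAt_unique hp b c x hb hc)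
  have hsub : ∀ j : Fin N → Fin p, cubeAt p j ⊆ cube N 1 := fun j => hU ▸ Set.subset_iUnion _ j
  have hprojc : Continuous (proj α : (Fin N → ℝ) → _) := by
    refine continuous_pi fun n => ?_
    simp only [proj]
    split_ifs
    · exact continuous_apply n
    · exact continuous_const
  have hAc : Continuous fun x => (A α k (proj α x) : ℂ) :=
    Complex.continuous_ofReal.comp
      ((hdiff α).continuous.comp (continuous_const.prodMk hprojc))
  have hb : ∀ j : Fin N → Fin p, ∀ x ∈ cubeAt p j,
      ‖(A α k (proj α x) : ℂ) - (A α (aV p i + epsV N p) (proj α (aV p j + epsV N p)) : ℂ)‖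
        ≤ gradNorm A α * (1 / (2 * p)) := by
    intro j x hx
    rw [← Complex.ofReal_sub, Complex.norm_real]
    exact kernel_mid A hdiff hbdd α p i j k x hi hx
  have hI : ∀ j : Fin N → Fin p, IntegrableOn (fun x => u (combine α x k)) (cubeAt p j) :=
    fun j => hint.mono_set (hsub j)
  have hI1 : ∀ j : Fin N → Fin p, IntegrableOn
      (fun x => (A α (aV p i + epsV N p) (proj α (aV p j + epsV N p)) : ℂ) * u (combine α x k))
      (cubeAt p j) := fun j => (hI j).const_mul _
  have hI2 : ∀ j : Fin N → Fin p, IntegrableOn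
      (fun x => ((A α k (proj α x) : ℂ) - (A α (aV p i + epsV N p) (proj α (aV p j + epsV N p)) : ℂ))
        * u (combine α x k)) (cubeAt p j) := by
    intro j
    refine Integrable.bdd_mul (c := gradNorm A α * (1 / (2 * p))) (hI j) ?_ ?_
    · exact (hAc.sub continuous_const).aestronglyMeasurable
    · exact (ae_restrict_iff' (measurableSet_cubeAt p j)).2 (Filter.Eventually.of_forall (hb j))
  have hI3 : ∀ j : Fin N → Fin p, IntegrableOn
      (fun x => (A α k (proj α x) : ℂ) * u (combine α x k)) (cubeAt p j) := by
    intro j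
    refine ((hI1 j).add (hI2 j)).congr (Filter.Eventually.of_forall fun x => ?_)
    simp only [Pi.add_apply]; ring
  rw [← hU, integral_iUnion_fintype (fun j => measurableSet_cubeAt p j) hdisj hI3,
    integral_iUnion_fintype (fun j => measurableSet_cubeAt p j) hdisj (fun j => (hI j).norm),
    ← Finset.sum_sub_distrib, Finset.mul_sum]
  refine (norm_sum_le _ _).trans (Finset.sum_le_sum fun j _ => ?_)
  rw [← integral_sub (hI3 j) (hI1 j), ← integral_const_mul]
  refine norm_integral_le_of_norm_le ((hI j).norm.const_mul _) ?_
  refine (ae_restrict_iff' (measurableSet_cubeAt p j)).2 (Filter.Eventually.of_forall fun x hx => ?_)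
  rw [← sub_mul, norm_mul]
  exact mul_le_mul_of_nonneg_right (hb j x hx) (norm_nonneg _)

lemma vol_cube (N : ℕ) : (volume.restrict (cube N 1) : Measure (Fin N → ℝ)) =
    Measure.pi fun _ : Fin N => (volume.restrict (Set.Ico (0 : ℝ) 1)) := by
  rw [cube, volume_pi, Measure.restrict_pi_pi]

instance instProb01 : IsProbabilityMeasure (volume.restrict (Set.Ico (0 : ℝ) 1)) :=
  ⟨by simp⟩

instance instProbCube (N : ℕ) : IsProbabilityMeasure (volume.restrict (cube N 1)) := by
  rw [vol_cube]; infer_instance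

lemma mp_combine {N : ℕ} (α : Finset (Fin N)) :
    MeasurePreserving (fun q : (Fin N → ℝ) × (Fin N → ℝ) => combine α q.2 q.1)
      ((volume.restrict (cube N 1)).prod (volume.restrict (cube N 1)))
      (volume.restrict (cube N 1)) := by
  have hm : Measurable (fun q : (Fin N → ℝ) × (Fin N → ℝ) => combine α q.2 q.1) := by
    refine measurable_pi_lambda _ fun n => ?_
    simp only [combine]
    split_ifs
    · exact (measurable_pi_apply n).comp measurable_snd
    · exact (measurable_pi_apply n).comp measurable_fst
  refine ⟨hm, ?_⟩
  rw [vol_cube]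
  symm
  refine Measure.pi_eq fun s hs => ?_
  rw [Measure.map_apply hm (MeasurableSet.univ_pi hs)]
  have : (fun q : (Fin N → ℝ) × (Fin N → ℝ) => combine α q.2 q.1) ⁻¹' Set.univ.pi s
      = (Set.univ.pi fun n => if n ∈ α then Set.univ else s n) ×ˢ
        (Set.univ.pi fun n => if n ∈ α then s n else Set.univ) := by
    ext q
    simp only [Set.mem_preimage, Set.mem_univ_pi, Set.mem_prod, ← forall_and]
    refine forall_congr' fun n => ?_
    by_cases h : n ∈ α <;> simp [combine, h]
  rw [this, Measure.prod_prod, Measure.pi_pi, Measure.pi_pi, ← Finset.prod_mul_distrib]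
  refine Finset.prod_congr rfl fun n _ => ?_
  by_cases h : n ∈ α <;> simp [h]

lemma v_facts {N : ℕ} (α : Finset (Fin N)) (u : (Fin N → ℝ) → ℂ)
    (hu : MemLp u 2 (volume.restrict (cube N 1))) :
    (∀ᵐ k ∂(volume.restrict (cube N 1)),
      IntegrableOn (fun x => u (combine α x k)) (cube N 1)) ∧
    AEStronglyMeasurable (fun k => ∫ x in cube N 1, ‖u (combine α x k)‖)
      (volume.restrict (cube N 1)) ∧
    eLpNorm (fun k => ∫ x in cube N 1, ‖u (combine α x k)‖) 2 (volume.restrict (cube N 1))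
      ≤ eLpNorm u 2 (volume.restrict (cube N 1)) := by
  have mp := mp_combine α
  have hc := hu.comp_measurePreserving mp
  have hi : Integrable _ _ := hc.integrable (by norm_num)
  have h1 := hi.prod_right_ae
  refine ⟨h1, hi.norm.integral_prod_left.aestronglyMeasurable, ?_⟩
  rw [← eLpNorm_comp_measurePreserving hu.1 mp]
  rw [eLpNorm_eq_lintegral_rpow_enorm_toReal (by norm_num) (by norm_num),
    eLpNorm_eq_lintegral_rpow_enorm_toReal (by norm_num) (by norm_num)]
  refine ENNReal.rpow_le_rpow ?_ (by positivity)
  rw [lintegral_prod _ (hc.1.enorm.pow_const _)]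
  refine lintegral_mono_ae ?_
  filter_upwards [h1] with k hk
  have h2 := eLpNorm_le_eLpNorm_of_exponent_le (p := 1) (q := 2) (by norm_num) hk.1
  rw [eLpNorm_one_eq_lintegral_enorm,
    eLpNorm_eq_lintegral_rpow_enorm_toReal (by norm_num) (by norm_num)] at h2
  have h3 : ‖∫ x in cube N 1, ‖u (combine α x k)‖‖ₑ ≤ ∫⁻ x in cube N 1, ‖u (combine α x k)‖ₑ := by
    refine (enorm_integral_le_lintegral_enorm _).trans (le_of_eq ?_)
    simp
  have h4 := ENNReal.rpow_le_rpow (h3.trans h2) (z := (2 : ENNReal).toReal) (by positivity)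
  refine h4.trans (le_of_eq ?_)
  rw [← ENNReal.rpow_mul]
  simp

/-- **Theorem 2 of the paper.** Let `𝒜_c` be the multi-kernel
operator on `L²([0,1)^N)` with real kernels `A_α` having bounded first
derivatives, and for `p ≥ 1` let `𝒜 = Ad p` be its midpoint discretization with
piecewise constant kernels.  Then
`‖𝒜_c − 𝒜‖ ≤ (N/(2p)) ∑_α ‖∇A_α‖_{L^∞}`, and `‖𝒜_c − 𝒜‖ → 0` as `p → ∞`. -/
theorem discretization_error_bound (N : ℕ) (hN : 1 ≤ N)
    (A : Finset (Fin N) → (Fin N → ℝ) → (Fin N → ℝ) → ℝ)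
    (hdiff : ∀ α, Differentiable ℝ
      (fun q : (Fin N → ℝ) × (Fin N → ℝ) => A α q.1 q.2))
    (hbdd : ∀ α, ∃ C : ℝ, ∀ q : (Fin N → ℝ) × (Fin N → ℝ),
      ‖fderiv ℝ (fun q : (Fin N → ℝ) × (Fin N → ℝ) => A α q.1 q.2) q‖ ≤ C)
    (Ac : Lp ℂ 2 (volume.restrict (cube N 1)) →L[ℂ]
      Lp ℂ 2 (volume.restrict (cube N 1)))
    (hAc : ∀ u : Lp ℂ 2 (volume.restrict (cube N 1)),
      (Ac u : (Fin N → ℝ) → ℂ) =ᵐ[volume.restrict (cube N 1)]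
        AcFun A (u : (Fin N → ℝ) → ℂ))
    (Ad : ℕ → (Lp ℂ 2 (volume.restrict (cube N 1)) →L[ℂ]
      Lp ℂ 2 (volume.restrict (cube N 1))))
    (hAd : ∀ p : ℕ, 1 ≤ p → ∀ u : Lp ℂ 2 (volume.restrict (cube N 1)),
      (Ad p u : (Fin N → ℝ) → ℂ) =ᵐ[volume.restrict (cube N 1)]
        AdFun A p (u : (Fin N → ℝ) → ℂ)) :
    (∀ p : ℕ, 1 ≤ p →
      ‖Ac - Ad p‖ ≤ (N / (2 * p)) * ∑ α : Finset (Fin N), gradNorm A α) ∧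
    Filter.Tendsto (fun p : ℕ => ‖Ac - Ad p‖) Filter.atTop (nhds 0) := by
  have hmain : ∀ p : ℕ, 1 ≤ p →
      ‖Ac - Ad p‖ ≤ (N / (2 * p)) * ∑ α : Finset (Fin N), gradNorm A α := by
    intro p hp
    have hS : 0 ≤ ∑ α : Finset (Fin N), gradNorm A α :=
      Finset.sum_nonneg fun α _ => gradNorm_nonneg A α
    have hS' : 0 ≤ ∑ α : Finset (Fin N), gradNorm A α * (1 / (2 * p)) :=
      Finset.sum_nonneg fun α _ => mul_nonneg (gradNorm_nonneg A α) (by positivity)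
    have hle : ∑ α : Finset (Fin N), gradNorm A α * (1 / (2 * p)) ≤
        (N / (2 * p)) * ∑ α : Finset (Fin N), gradNorm A α := by
      rw [← Finset.sum_mul, mul_comm]
      refine mul_le_mul_of_nonneg_right ?_ hS
      have : (1 : ℝ) ≤ N := by exact_mod_cast hN
      gcongr
    refine le_trans ?_ hle
    refine ContinuousLinearMap.opNorm_le_bound _ hS' fun u => ?_
    have hu := Lp.memLp u
    have hae : ∀ᵐ k ∂(volume.restrict (cube N 1)), ‖((Ac - Ad p) u : (Fin N → ℝ) → ℂ) k‖ ≤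
        ‖∑ α : Finset (Fin N), gradNorm A α * (1 / (2 * p)) *
          ∫ x in cube N 1, ‖(u : (Fin N → ℝ) → ℂ) (combine α x k)‖‖ := by
      have hall : ∀ᵐ k ∂(volume.restrict (cube N 1)), ∀ α : Finset (Fin N),
          IntegrableOn (fun x => (u : (Fin N → ℝ) → ℂ) (combine α x k)) (cube N 1) :=
        ae_all_iff.2 fun α => (v_facts α _ hu).1
      filter_upwards [hall, hAc u, hAd p hp u, Lp.coeFn_sub (Ac u) (Ad p u),
        ae_restrict_mem (measurableSet_cube N 1)] with k h1 h2 h3 h4 h5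
      rw [ContinuousLinearMap.sub_apply, h4, Pi.sub_apply, h2, h3, AcFun, AdFun,
        ← Finset.sum_sub_distrib]
      refine le_trans ?_ (le_abs_self _)
      refine (norm_sum_le _ _).trans (Finset.sum_le_sum fun α _ => ?_)
      exact term_bound hp A hdiff hbdd α _ k h5 (h1 α)
    have h6 := eLpNorm_mono_ae (p := 2) hae
    have h7 : eLpNorm (fun k => ∑ α : Finset (Fin N), gradNorm A α * (1 / (2 * p)) *
          ∫ x in cube N 1, ‖(u : (Fin N → ℝ) → ℂ) (combine α x k)‖) 2
          (volume.restrict (cube N 1)) ≤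
        ENNReal.ofReal (∑ α : Finset (Fin N), gradNorm A α * (1 / (2 * p))) *
          eLpNorm u 2 (volume.restrict (cube N 1)) := by
      have h8 := eLpNorm_sum_le (μ := volume.restrict (cube N 1)) (p := 2) (s := Finset.univ)
        (f := fun (α : Finset (Fin N)) k => gradNorm A α * (1 / (2 * p)) *
          ∫ x in cube N 1, ‖(u : (Fin N → ℝ) → ℂ) (combine α x k)‖)
        (fun α _ => (v_facts α _ hu).2.1.const_mul _) (by norm_num)
      have h9 : (∑ α : Finset (Fin N), fun k => gradNorm A α * (1 / (2 * p)) *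
          ∫ x in cube N 1, ‖(u : (Fin N → ℝ) → ℂ) (combine α x k)‖) =
          (fun k => ∑ α : Finset (Fin N), gradNorm A α * (1 / (2 * p)) *
          ∫ x in cube N 1, ‖(u : (Fin N → ℝ) → ℂ) (combine α x k)‖) := by
        funext k; simp
      rw [h9] at h8
      refine h8.trans ?_
      rw [ENNReal.ofReal_sum_of_nonneg
        (fun α _ => mul_nonneg (gradNorm_nonneg A α) (by positivity)), Finset.sum_mul]
      refine Finset.sum_le_sum fun α _ => ?_
      have h10 := eLpNorm_const_smul (gradNorm A α * (1 / (2 * p)))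
        (fun k => ∫ x in cube N 1, ‖(u : (Fin N → ℝ) → ℂ) (combine α x k)‖) 2
        (volume.restrict (cube N 1))
      have h11 : ‖gradNorm A α * (1 / (2 * p))‖ₑ = ENNReal.ofReal (gradNorm A α * (1 / (2 * p))) :=
        Real.enorm_of_nonneg (mul_nonneg (gradNorm_nonneg A α) (by positivity))
      rw [h11] at h10
      exact h10.le.trans (mul_le_mul_right (v_facts α _ hu).2.2 _)
    have h12 := ENNReal.toReal_mono
      (ENNReal.mul_ne_top ENNReal.ofReal_ne_top hu.2.ne) (h6.trans h7)
    rw [ENNReal.toReal_mul, ENNReal.toReal_ofReal hS'] at h12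
    rw [Lp.norm_def, Lp.norm_def]
    exact h12
  refine ⟨hmain, ?_⟩
  refine squeeze_zero' (Filter.Eventually.of_forall fun p => norm_nonneg _)
    (Filter.eventually_atTop.2 ⟨1, hmain⟩) ?_
  have h : Filter.Tendsto (fun p : ℕ => ((N : ℝ) / 2 * ∑ α : Finset (Fin N), gradNorm A α) / (p : ℝ))
      Filter.atTop (nhds 0) := tendsto_const_div_atTop_nhds_zero_nat _
  refine h.congr fun p => ?_
  rw [← div_div]
  ring

end Stmt14
end
end

section
/- Under the setting of the midpoint discretization of the multi-kernel operator (Ω = [0,1)^N, kernels A_α real with bounded first derivatives, 𝒜_c the multi-kernel operator and 𝒜 its discretization at level p), assume in addition that 𝒜_c is self-adjoint, i.e. A_α(k, x_α) = A_α(k_ᾱ + x_α, k_α) for all α, k, x. Then 𝒜 is a self-adjoint bounded operator on L²(Ω), and with δ = (N/(2p)) ∑_{α⊆{1,...,N}} ‖∇A_α‖_{L^∞} the spectra satisfy sp(𝒜_c) ⊆ B_δ(sp(𝒜)) and sp(𝒜) ⊆ B_δ(sp(𝒜_c)), where B_δ(E) denotes the closed δ-neighbourhood of a set E ⊆ ℝ.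 -/
/-!
STATEMENT 15: If moreover the kernels are symmetric
(A_α(k, x_α) = A_α(k_ᾱ + x_α, k_α), so that 𝒜_c is self-adjoint), then the
discretization 𝒜 is self-adjoint and, with
δ = (N/(2p)) ∑_α ‖∇A_α‖_{L^∞}, sp(𝒜_c) ⊆ B_δ(sp(𝒜)) and
sp(𝒜) ⊆ B_δ(sp(𝒜_c)) (closed δ-neighbourhoods).
-/

open MeasureTheory Finset

noncomputable section

namespace Stmt15

/-- The half-open cube `[0,h)^N`. -/
def cube (N : ℕ) (h : ℝ) : Set (Fin N → ℝ) := Set.univ.pi fun _ => Set.Ico 0 h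

/-- `x_α`: the vector whose `n`-th coordinate is `x n` for `n ∈ α` and `0` for
`n ∉ α`. -/
def proj {N : ℕ} (α : Finset (Fin N)) (x : Fin N → ℝ) : Fin N → ℝ :=
  fun n => if n ∈ α then x n else 0

/-- `k_ᾱ + x_α`: the point whose coordinates in `α` come from `x` and whose
coordinates outside `α` come from `k`. -/
def combine {N : ℕ} (α : Finset (Fin N)) (x k : Fin N → ℝ) : Fin N → ℝ :=
  fun n => if n ∈ α then x n else k n

/-- The pointwise formula of the multi-kernel operator
`𝒜_c u(k) = ∑_α ∫_{[0,1)^{|α|}} A_α(k, x_α) u(k_ᾱ + x_α) dx_α`.  The partial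
integral over the coordinates in `α` is realized as an integral over the whole
unit cube: the integrand depends only on the coordinates of `x` in `α`, and the
remaining coordinates range over `[0,1)`, contributing a factor `1` each. -/
def AcFun {N : ℕ} (A : Finset (Fin N) → (Fin N → ℝ) → (Fin N → ℝ) → ℝ)
    (u : (Fin N → ℝ) → ℂ) : (Fin N → ℝ) → ℂ :=
  fun k => ∑ α : Finset (Fin N),
    ∫ x in cube N 1, (A α k (proj α x) : ℂ) * u (combine α x k)

/-- `‖∇A_α‖_{L^∞}`: the supremum norm of the (total) derivative of the kernel
`A_α`, as a function of the joint variable `(k, x)`. -/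
def gradNorm {N : ℕ} (A : Finset (Fin N) → (Fin N → ℝ) → (Fin N → ℝ) → ℝ)
    (α : Finset (Fin N)) : ℝ :=
  ⨆ q : (Fin N → ℝ) × (Fin N → ℝ),
    ‖fderiv ℝ (fun q : (Fin N → ℝ) × (Fin N → ℝ) => A α q.1 q.2) q‖

/-- The vertex `a_i = 𝐛/p` of a subcube of the uniform partition of `[0,1)^N`
into `p^N` subcubes; the subcubes are indexed by their digit vectors
`𝐛 ∈ {0,...,p−1}^N` (the base-`p` digits of `i − 1`). -/
def aV {N : ℕ} (p : ℕ) (b : Fin N → Fin p) : Fin N → ℝ := fun n => (b n : ℝ) / p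

/-- The midpoint shift `ε = (1/(2p),...,1/(2p))`. -/
def epsV (N p : ℕ) : Fin N → ℝ := fun _ => 1 / (2 * p)

/-- The subcube `Ω_i = a_i + [0,1/p)^N`. -/
def cubeAt {N : ℕ} (p : ℕ) (b : Fin N → Fin p) : Set (Fin N → ℝ) :=
  {x | x - aV p b ∈ cube N (1 / p)}

/-- The piecewise-constant coefficients
`A_{ij}^α = A_α(a_i + ε, (a_j + ε)_α)` if `(a_i)_ᾱ = (a_j)_ᾱ`, else `0`. -/
def coefA {N : ℕ} (A : Finset (Fin N) → (Fin N → ℝ) → (Fin N → ℝ) → ℝ)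
    (p : ℕ) (α : Finset (Fin N)) (i j : Fin N → Fin p) : ℂ :=
  if ∀ n ∉ α, i n = j n then
    (A α (aV p i + epsV N p) (proj α (aV p j + epsV N p)) : ℂ)
  else 0

/-- The pointwise formula of the scalar elementary operator `𝓔_{ij}^α[c]`
(with `h = 1/p`, `M = 1`):
`(𝓔_{ij}^α[c]u)(x + a_i) = p^{|α|} c ∫_{[0,1/p)^{|α|}} u(x' + a_j) dx'_α`, and
`0` outside `Ω_i`.  The partial integral over the coordinates in `α` is realized
as an integral over the whole cube `[0,1/p)^N` (the integrand does not depend on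
the coordinates of `y` outside `α`), compensated by the additional
normalization `p^{N−|α|}`. -/
def EfunP {N : ℕ} (p : ℕ) (i j : Fin N → Fin p) (α : Finset (Fin N)) (c : ℂ)
    (u : (Fin N → ℝ) → ℂ) : (Fin N → ℝ) → ℂ :=
  (cubeAt p i).indicator fun x =>
    ((p : ℂ) ^ α.card * (p : ℂ) ^ (N - α.card)) * c *
      ∫ y in cube N (1 / p), u (aV p j + combine α y (x - aV p i))

/-- The pointwise formula of the midpoint discretization
`𝒜 = ∑_α ∑_{i,j=1}^{p^N} p^{−|α|} 𝓔_{ij}^α[A_{ij}^α]`. -/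
def AdFun {N : ℕ} (A : Finset (Fin N) → (Fin N → ℝ) → (Fin N → ℝ) → ℝ)
    (p : ℕ) (u : (Fin N → ℝ) → ℂ) : (Fin N → ℝ) → ℂ :=
  fun x => ∑ α : Finset (Fin N), ∑ i : Fin N → Fin p, ∑ j : Fin N → Fin p,
    ((p : ℂ) ^ α.card)⁻¹ * EfunP p i j α (coefA A p α i j) u x

theorem spec_aux {H : Type*} [NormedAddCommGroup H] [InnerProductSpace ℂ H] [CompleteSpace H]
    (S T : H →L[ℂ] H) (hS : IsSelfAdjoint S) (hT : IsSelfAdjoint T) (δ : ℝ) (hδ : 0 ≤ δ)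
    (h : ‖S - T‖ ≤ δ) :
    spectrum ℂ S ⊆ Metric.cthickening δ (spectrum ℂ T) := by
  intro l hl
  by_contra hcon
  rw [Metric.mem_cthickening_iff, not_le] at hcon
  obtain ⟨r, hr1, hr2⟩ := ENNReal.lt_iff_exists_nnreal_btwn.1 hcon
  have hr1' : δ < r := by
    rw [ENNReal.ofReal_lt_coe_iff hδ] at hr1
    exact hr1
  have hrpos : (0:ℝ) < r := lt_of_le_of_lt hδ hr1'
  have hdist : ∀ z ∈ spectrum ℂ T, (r:ℝ) ≤ ‖l - z‖ := by
    intro z hz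
    have h1 : (r : ENNReal) ≤ edist l z := hr2.le.trans (Metric.infEDist_le_edist_of_mem hz)
    rw [edist_nndist] at h1
    have h2 : r ≤ nndist l z := by exact_mod_cast h1
    rw [← dist_eq_norm]
    exact_mod_cast h2
  have hnot : l ∉ spectrum ℂ T := by
    intro hz
    have := hdist l hz
    rw [sub_self, norm_zero] at this
    exact absurd hrpos (not_lt.2 this)
  have hu : IsUnit (algebraMap ℂ (H →L[ℂ] H) l - T) := spectrum.notMem_iff.1 hnot
  obtain ⟨U, hU⟩ := hu
  have hlr : star l = l := by
    have := hS.mem_spectrum_eq_re hl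
    rw [this]; simp
  have hUs : star U = U := by
    ext1
    rw [Units.coe_star, hU, star_sub, hT.star_eq, ← algebraMap_star_comm, hlr]
  have hUinv : IsSelfAdjoint ((U⁻¹ : (H →L[ℂ] H)ˣ) : H →L[ℂ] H) := by
    rw [isSelfAdjoint_iff, ← Units.coe_star, star_inv, hUs]
  have hnorm : ‖((U⁻¹ : (H →L[ℂ] H)ˣ) : H →L[ℂ] H)‖ ≤ (r:ℝ)⁻¹ := by
    have h1 : spectralRadius ℂ ((U⁻¹ : (H →L[ℂ] H)ˣ) : H →L[ℂ] H) ≤ ((r⁻¹ : NNReal) : ENNReal) := by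
      refine iSup₂_le fun z hz => ?_
      have hz' : z⁻¹ ∈ spectrum ℂ (U : H →L[ℂ] H) := by
        have := (spectrum.inv₀_mem_iff (r := z) (a := U)).2 hz
        exact this
      have hz0 : z⁻¹ ≠ 0 := spectrum.ne_zero_of_mem_of_unit hz'
      rw [hU, ← spectrum.singleton_sub_eq] at hz'
      obtain ⟨w, hw, hwz⟩ := (by simpa using hz' : ∃ w ∈ spectrum ℂ T, l - w = z⁻¹)
      have h2 := hdist w hw
      rw [hwz, norm_inv] at h2
      have h3 : 0 < ‖z‖ := by
        rw [norm_pos_iff]; intro h0; simp [h0] at hz0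
      have h4 : ‖z‖ ≤ (r:ℝ)⁻¹ := by
        rw [le_inv_comm₀ h3 hrpos]; exact h2
      have : ‖z‖₊ ≤ r⁻¹ := by exact_mod_cast h4
      exact_mod_cast this
    rw [IsSelfAdjoint.spectralRadius_eq_nnnorm hUinv] at h1
    exact_mod_cast h1
  have : IsUnit (algebraMap ℂ (H →L[ℂ] H) l - S) := by
    by_cases htr : Nontrivial (H →L[ℂ] H)
    · have hpos : 0 < ‖((U⁻¹ : (H →L[ℂ] H)ˣ) : H →L[ℂ] H)‖ := Units.norm_pos _
      refine ⟨Units.ofNearby U (algebraMap ℂ (H →L[ℂ] H) l - S) ?_, rfl⟩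
      have h5 : (r:ℝ) ≤ ‖((U⁻¹ : (H →L[ℂ] H)ˣ) : H →L[ℂ] H)‖⁻¹ := by
        rw [le_inv_comm₀ hrpos hpos]; exact hnorm
      refine lt_of_le_of_lt ?_ (hr1'.trans_le h5)
      rw [hU, sub_sub_sub_cancel_left, norm_sub_rev]
      exact h
    · rw [not_nontrivial_iff_subsingleton] at htr
      exact isUnit_of_subsingleton _
  exact hl this

/-- The unit cube measure. -/
abbrev muc (N : ℕ) : Measure (Fin N → ℝ) := volume.restrict (cube N 1)

theorem muc_eq (N : ℕ) : muc N = Measure.pi (fun _ : Fin N => volume.restrict (Set.Ico (0:ℝ) 1)) := by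
  rw [muc, cube, volume_pi, Measure.restrict_pi_pi]

instance ico_prob : IsProbabilityMeasure (volume.restrict (Set.Ico (0:ℝ) 1)) := ⟨by simp⟩

instance muc_prob (N : ℕ) : IsProbabilityMeasure (muc N) := by
  rw [muc_eq]; infer_instance

/-- The swap of the `α` coordinates. -/
def swp {N : ℕ} (α : Finset (Fin N)) (q : (Fin N → ℝ) × (Fin N → ℝ)) : (Fin N → ℝ) × (Fin N → ℝ) :=
  (combine α q.2 q.1, combine α q.1 q.2)

theorem swp_mp {N : ℕ} (α : Finset (Fin N)) :
    MeasurePreserving (swp α) ((muc N).prod (muc N)) ((muc N).prod (muc N)) := by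
  rw [muc_eq]
  have h1 := measurePreserving_arrowProdEquivProdArrow ℝ ℝ (Fin N)
    (fun _ => volume.restrict (Set.Ico (0:ℝ) 1)) (fun _ => volume.restrict (Set.Ico (0:ℝ) 1))
  have h2 : MeasurePreserving (fun (f : Fin N → ℝ × ℝ) n => (if n ∈ α then Prod.swap else id) (f n))
      (Measure.pi fun _ : Fin N => (volume.restrict (Set.Ico (0:ℝ) 1)).prod
        (volume.restrict (Set.Ico (0:ℝ) 1)))
      (Measure.pi fun _ : Fin N => (volume.restrict (Set.Ico (0:ℝ) 1)).prod
        (volume.restrict (Set.Ico (0:ℝ) 1))) := by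
    refine measurePreserving_pi (f := fun n => if n ∈ α then Prod.swap else id) _ _ fun n => ?_
    by_cases hn : n ∈ α
    · simp only [hn, if_true]; exact Measure.measurePreserving_swap
    · simp only [hn, if_false]; exact MeasurePreserving.id _
  have h3 := h1.comp (h2.comp h1.symm)
  convert h3 using 1
  funext q
  refine Prod.ext ?_ ?_ <;> funext n <;> by_cases hn : n ∈ α <;>
    simp [swp, combine, hn, MeasurableEquiv.arrowProdEquivProdArrow, Equiv.arrowProdEquivProdArrow]

/-- Kernel operator formula. -/
def TK {N : ℕ} (K : Finset (Fin N) → (Fin N → ℝ) → (Fin N → ℝ) → ℝ)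
    (u : (Fin N → ℝ) → ℂ) : (Fin N → ℝ) → ℂ :=
  fun k => ∑ α : Finset (Fin N), ∫ x in cube N 1, (K α k x : ℂ) * u (combine α x k)

theorem s1_mp {N : ℕ} (α : Finset (Fin N)) :
    MeasurePreserving (fun q : (Fin N → ℝ) × (Fin N → ℝ) => combine α q.2 q.1)
      ((muc N).prod (muc N)) (muc N) :=
  measurePreserving_fst.comp (swp_mp α)

theorem cube_meas (N : ℕ) (h : ℝ) : MeasurableSet (cube N h) :=
  MeasurableSet.univ_pi fun _ => measurableSet_Ico

theorem ae_cube2 (N : ℕ) : ∀ᵐ q ∂((muc N).prod (muc N)), q.1 ∈ cube N 1 ∧ q.2 ∈ cube N 1 := by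
  rw [Measure.prod_restrict]
  exact ae_restrict_mem ((cube_meas N 1).prod (cube_meas N 1))

/-- Good kernels. -/
structure GoodK {N : ℕ} (K : (Fin N → ℝ) → (Fin N → ℝ) → ℝ) : Prop where
  meas : Measurable (fun q : (Fin N → ℝ) × (Fin N → ℝ) => K q.1 q.2)
  bdd : ∃ C : ℝ, ∀ k ∈ cube N 1, ∀ x ∈ cube N 1, |K k x| ≤ C

theorem memP {N : ℕ} {K : (Fin N → ℝ) → (Fin N → ℝ) → ℝ} (hK : GoodK K) (α : Finset (Fin N))
    (u : Lp ℂ 2 (muc N)) :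
    MemLp (fun q : (Fin N → ℝ) × (Fin N → ℝ) => (K q.1 q.2 : ℂ) * u (combine α q.2 q.1)) 2
      ((muc N).prod (muc N)) := by
  obtain ⟨C, hC⟩ := hK.bdd
  have h1 : MemLp (fun q : (Fin N → ℝ) × (Fin N → ℝ) => u (combine α q.2 q.1)) 2
      ((muc N).prod (muc N)) := (Lp.memLp u).comp_measurePreserving (s1_mp α)
  refine MemLp.of_le_mul (c := C) h1 ?_ ?_
  · exact (Complex.measurable_ofReal.comp hK.meas).aestronglyMeasurable.mul h1.1
  · filter_upwards [ae_cube2 N] with q hq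
    rw [norm_mul, Complex.norm_real, Real.norm_eq_abs]
    gcongr
    exact hC _ hq.1 _ hq.2

/-- Kernel times pulled back function. -/
def P {N : ℕ} {K : (Fin N → ℝ) → (Fin N → ℝ) → ℝ} (hK : GoodK K) (α : Finset (Fin N))
    (u : Lp ℂ 2 (muc N)) : Lp ℂ 2 ((muc N).prod (muc N)) := (memP hK α u).toLp _

/-- Pull back along the first coordinate. -/
def V {N : ℕ} (v : Lp ℂ 2 (muc N)) : Lp ℂ 2 ((muc N).prod (muc N)) :=
  Lp.compMeasurePreserving Prod.fst measurePreserving_fst v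

theorem V_norm {N : ℕ} (v : Lp ℂ 2 (muc N)) : ‖V v‖ = ‖v‖ :=
  Lp.norm_compMeasurePreserving _ _

theorem innPV {N : ℕ} {K : (Fin N → ℝ) → (Fin N → ℝ) → ℝ} (hK : GoodK K) (α : Finset (Fin N))
    (u v : Lp ℂ 2 (muc N)) : inner ℂ (P hK α u) (V v) =
      ∫ q, inner ℂ ((K q.1 q.2 : ℂ) * u (combine α q.2 q.1)) (v q.1) ∂((muc N).prod (muc N)) := by
  rw [L2.inner_def]
  refine integral_congr_ae ?_
  filter_upwards [(memP hK α u).coeFn_toLp,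
    Lp.coeFn_compMeasurePreserving v (measurePreserving_fst (μ := muc N) (ν := muc N))] with q h1 h2
  rw [P, V, h1, h2]; rfl

theorem intPV {N : ℕ} {K : (Fin N → ℝ) → (Fin N → ℝ) → ℝ} (hK : GoodK K) (α : Finset (Fin N))
    (u v : Lp ℂ 2 (muc N)) : Integrable (fun q : (Fin N → ℝ) × (Fin N → ℝ) =>
      inner ℂ ((K q.1 q.2 : ℂ) * u (combine α q.2 q.1)) (v q.1)) ((muc N).prod (muc N)) := by
  refine (L2.integrable_inner (𝕜 := ℂ) (P hK α u) (V v)).congr ?_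
  filter_upwards [(memP hK α u).coeFn_toLp,
    Lp.coeFn_compMeasurePreserving v (measurePreserving_fst (μ := muc N) (ν := muc N))] with q h1 h2
  rw [P, V, h1, h2]; rfl

theorem int_slice {N : ℕ} {K : (Fin N → ℝ) → (Fin N → ℝ) → ℝ} (hK : GoodK K) (α : Finset (Fin N))
    (u : Lp ℂ 2 (muc N)) : ∀ᵐ k ∂(muc N),
      Integrable (fun x => (K k x : ℂ) * u (combine α x k)) (muc N) :=
  ((memP hK α u).integrable (by norm_num)).prod_right_ae

theorem inner_form {N : ℕ} {K : Finset (Fin N) → (Fin N → ℝ) → (Fin N → ℝ) → ℝ}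
    (hK : ∀ α, GoodK (K α)) (T : Lp ℂ 2 (muc N) →L[ℂ] Lp ℂ 2 (muc N))
    (hT : ∀ u : Lp ℂ 2 (muc N), (T u : (Fin N → ℝ) → ℂ) =ᵐ[muc N] TK K u)
    (u v : Lp ℂ 2 (muc N)) :
    inner ℂ (T u) v = ∑ α, inner ℂ (P (hK α) α u) (V v) := by
  simp_rw [innPV]
  rw [L2.inner_def]
  have h1 : ∀ α, Integrable (fun k => ∫ x, inner ℂ ((K α k x : ℂ) * u (combine α x k)) (v k) ∂(muc N))
      (muc N) := fun α => (intPV (hK α) α u v).integral_prod_left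
  have h2 : ∀ α, ∫ q, inner ℂ ((K α q.1 q.2 : ℂ) * u (combine α q.2 q.1)) (v q.1)
      ∂((muc N).prod (muc N)) =
      ∫ k, ∫ x, inner ℂ ((K α k x : ℂ) * u (combine α x k)) (v k) ∂(muc N) ∂(muc N) :=
    fun α => integral_prod _ (intPV (hK α) α u v)
  simp_rw [h2]
  rw [← integral_finsetSum _ (fun α _ => h1 α)]
  refine integral_congr_ae ?_
  filter_upwards [hT u, ae_all_iff.2 (fun α => int_slice (hK α) α u)] with k hk hi
  rw [hk, TK, sum_inner]
  refine Finset.sum_congr rfl fun α _ => ?_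
  simp only [RCLike.inner_apply]
  rw [integral_const_mul, integral_conj]

theorem TK_sa {N : ℕ} {K : Finset (Fin N) → (Fin N → ℝ) → (Fin N → ℝ) → ℝ}
    (hK : ∀ α, GoodK (K α)) (hsym : ∀ α k x, K α (combine α x k) (combine α k x) = K α k x)
    (T : Lp ℂ 2 (muc N) →L[ℂ] Lp ℂ 2 (muc N))
    (hT : ∀ u : Lp ℂ 2 (muc N), (T u : (Fin N → ℝ) → ℂ) =ᵐ[muc N] TK K u) :
    IsSelfAdjoint T := by
  rw [ContinuousLinearMap.isSelfAdjoint_iff_isSymmetric]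
  intro u v
  change inner ℂ (T u) v = inner ℂ u (T v)
  rw [← inner_conj_symm u (T v), inner_form hK T hT, inner_form hK T hT, map_sum]
  refine Finset.sum_congr rfl fun α _ => ?_
  rw [innPV, innPV, ← integral_conj]
  have h1 := integral_map (μ := (muc N).prod (muc N)) (swp_mp α).measurable.aemeasurable
    (f := fun q => inner ℂ ((K α q.1 q.2 : ℂ) * u (combine α q.2 q.1)) (v q.1))
    (by rw [(swp_mp α).map_eq]; exact (intPV (hK α) α u v).1)
  rw [(swp_mp α).map_eq] at h1
  rw [h1]
  refine integral_congr_ae (Filter.Eventually.of_forall fun q => ?_)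
  have h2 : combine α (combine α q.1 q.2) (combine α q.2 q.1) = q.1 := by
    funext n; by_cases hn : n ∈ α <;> simp [combine, hn]
  simp only [swp, hsym, h2, RCLike.inner_apply, map_mul, Complex.conj_ofReal, Complex.conj_conj]
  ring

theorem TK_diff {N : ℕ} {K L : Finset (Fin N) → (Fin N → ℝ) → (Fin N → ℝ) → ℝ}
    (hK : ∀ α, GoodK (K α)) (hL : ∀ α, GoodK (L α))
    (S T : Lp ℂ 2 (muc N) →L[ℂ] Lp ℂ 2 (muc N))
    (hS : ∀ u : Lp ℂ 2 (muc N), (S u : (Fin N → ℝ) → ℂ) =ᵐ[muc N] TK K u)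
    (hT : ∀ u : Lp ℂ 2 (muc N), (T u : (Fin N → ℝ) → ℂ) =ᵐ[muc N] TK L u)
    (c : Finset (Fin N) → ℝ) (hc0 : ∀ α, 0 ≤ c α)
    (hc : ∀ α, ∀ k ∈ cube N 1, ∀ x ∈ cube N 1, |K α k x - L α k x| ≤ c α) :
    ‖S - T‖ ≤ ∑ α, c α := by
  have hs : 0 ≤ ∑ α, c α := Finset.sum_nonneg fun α _ => hc0 α
  have key : ∀ u v, ‖(inner ℂ ((S - T) u) v : ℂ)‖ ≤ (∑ α, c α) * ‖u‖ * ‖v‖ := by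
    intro u v
    rw [sub_apply, inner_sub_left, inner_form hK S hS, inner_form hL T hT,
      ← Finset.sum_sub_distrib, Finset.sum_mul, Finset.sum_mul]
    refine (norm_sum_le _ _).trans (Finset.sum_le_sum fun α _ => ?_)
    rw [← inner_sub_left]
    refine (norm_inner_le_norm _ _).trans ?_
    rw [V_norm]
    gcongr
    rw [← Lp.norm_compMeasurePreserving u (s1_mp α)]
    refine Lp.norm_le_mul_norm_of_ae_le_mul ?_
    filter_upwards [ae_cube2 N, Lp.coeFn_sub (P (hK α) α u) (P (hL α) α u),
      (memP (hK α) α u).coeFn_toLp, (memP (hL α) α u).coeFn_toLp,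
      Lp.coeFn_compMeasurePreserving u (s1_mp α)] with q h1 h2 h3 h4 h5
    rw [h2, Pi.sub_apply, P, P, h3, h4, h5, ← sub_mul, norm_mul, ← Complex.ofReal_sub,
      Complex.norm_real, Real.norm_eq_abs]
    exact mul_le_mul_of_nonneg_right (hc α _ h1.1 _ h1.2) (norm_nonneg _)
  refine ContinuousLinearMap.opNorm_le_bound _ hs fun u => ?_
  have h := key u ((S - T) u)
  rw [inner_self_eq_norm_sq_to_K] at h
  simp only [norm_pow, Complex.coe_algebraMap, Complex.norm_real, norm_norm] at h
  by_cases h0 : ‖(S - T) u‖ = 0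
  · rw [h0]; positivity
  · have : 0 < ‖(S - T) u‖ := lt_of_le_of_ne (norm_nonneg _) (Ne.symm h0)
    rw [sq] at h
    exact le_of_mul_le_mul_right h this

/-- Midpoint map. -/
def mid {N : ℕ} (p : ℕ) (k : Fin N → ℝ) : Fin N → ℝ := fun n => ((⌊(p:ℝ) * k n⌋ : ℝ)) / p + 1 / (2 * p)

theorem mem_cubeAt {N p : ℕ} (hp : 1 ≤ p) (b : Fin N → Fin p) (x : Fin N → ℝ) :
    x ∈ cubeAt p b ↔ ∀ n, ⌊(p:ℝ) * x n⌋ = ((b n : ℕ) : ℤ) := by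
  have hp0 : (0:ℝ) < p := by exact_mod_cast hp
  simp only [cubeAt, cube, aV, Set.mem_ofPred_eq, Set.mem_univ_pi, Pi.sub_apply, Set.mem_Ico]
  refine forall_congr' fun n => ?_
  rw [Int.floor_eq_iff]
  push_cast
  rw [sub_nonneg, div_le_iff₀ hp0, sub_lt_iff_lt_add', ← add_div, lt_div_iff₀ hp0, mul_comm]

theorem mid_cubeAt {N p : ℕ} (hp : 1 ≤ p) (b : Fin N → Fin p) (x : Fin N → ℝ)
    (hx : x ∈ cubeAt p b) : mid p x = aV p b + epsV N p := by
  rw [mem_cubeAt hp] at hx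
  funext n
  simp [mid, aV, epsV, hx n]

theorem cube_union {N p : ℕ} (hp : 1 ≤ p) : cube N 1 = ⋃ b : Fin N → Fin p, cubeAt p b := by
  have hp0 : (0:ℝ) < p := by exact_mod_cast hp
  ext x
  simp only [Set.mem_iUnion, mem_cubeAt hp]
  simp only [cube, Set.mem_univ_pi, Set.mem_Ico]
  constructor
  · intro h
    refine ⟨fun n => ⟨⌊(p:ℝ) * x n⌋₊, ?_⟩, fun n => ?_⟩
    · rw [Nat.floor_lt (by have := (h n).1; positivity)]
      nlinarith [(h n).2]
    · exact (Int.natCast_floor_eq_floor (by have := (h n).1; positivity)).symm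
  · rintro ⟨b, hb⟩ n
    have h1 := Int.floor_eq_iff.1 (hb n)
    push_cast at h1
    have h2 : ((b n : ℕ) : ℝ) + 1 ≤ p := by exact_mod_cast (b n).2
    have h3 : (0:ℝ) ≤ (b n : ℕ) := by positivity
    constructor
    · by_contra hneg
      nlinarith [h1.1]
    · by_contra hneg
      nlinarith [h1.2]

theorem cubeAt_disj {N p : ℕ} (hp : 1 ≤ p) :
    Pairwise (Function.onFun Disjoint (fun b : Fin N → Fin p => cubeAt p b)) := by
  intro b c hbc
  refine Set.disjoint_left.2 fun x hx hy => hbc ?_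
  rw [mem_cubeAt hp] at hx hy
  funext n
  have := (hx n).symm.trans (hy n)
  exact Fin.ext (by exact_mod_cast this)

theorem cubeAt_meas {N p : ℕ} (b : Fin N → Fin p) : MeasurableSet (cubeAt p b) :=
  (cube_meas N (1/p)).preimage (measurable_id.sub_const _)

theorem int_cubeAt {N p : ℕ} (b : Fin N → Fin p) (f : (Fin N → ℝ) → ℂ) :
    ∫ x in cubeAt p b, f x = ∫ y in cube N (1/p), f (aV p b + y) := by
  rw [← integral_indicator (cubeAt_meas b), ← integral_indicator (cube_meas _ _),
    ← integral_add_left_eq_self _ (aV p b)]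
  congr 1
  funext y
  have : (aV p b + y ∈ cubeAt p b) ↔ y ∈ cube N (1/p) := by
    change aV p b + y - aV p b ∈ cube N (1/p) ↔ _
    rw [add_sub_cancel_left]
  by_cases hy : y ∈ cube N (1/p)
  · rw [Set.indicator_of_mem (this.2 hy), Set.indicator_of_mem hy]
  · rw [Set.indicator_of_notMem (fun h => hy (this.1 h)), Set.indicator_of_notMem hy]

theorem fiber_sum {N p : ℕ} (α : Finset (Fin N)) (i : Fin N → Fin p)
    (F : (Fin N → Fin p) → ℂ) (hF : ∀ j j', (∀ n ∈ α, j n = j' n) → F j = F j') :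
    ∑ j, F j = (p:ℂ)^(N - α.card) * ∑ j, if ∀ n ∉ α, i n = j n then F j else 0 := by
  classical
  rw [← Finset.sum_filter, Finset.mul_sum]
  let c : (Fin N → Fin p) → (Fin N → Fin p) := fun j n => if n ∈ α then j n else i n
  rw [← Finset.sum_fiberwise_of_maps_to (s := Finset.univ)
    (t := Finset.univ.filter fun j : Fin N → Fin p => ∀ n ∉ α, i n = j n) (g := c)
    (fun j _ => by simp only [Finset.mem_filter, Finset.mem_univ, true_and, c]; intro n hn; simp [hn])]
  refine Finset.sum_congr rfl fun m hm => ?_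
  simp only [Finset.mem_filter, Finset.mem_univ, true_and] at hm
  have hcard : (Finset.univ.filter fun j => c j = m) =
      Fintype.piFinset (fun n => if n ∈ α then {m n} else Finset.univ) := by
    ext j
    simp only [Finset.mem_filter, Finset.mem_univ, true_and, Fintype.mem_piFinset, c, funext_iff]
    refine forall_congr' fun n => ?_
    by_cases hn : n ∈ α
    · simp [hn]
    · simp [hn, hm n hn]
  rw [Finset.sum_congr rfl (g := fun _ => F m), Finset.sum_const, hcard, Fintype.card_piFinset,
    nsmul_eq_mul]
  · congr 1
    have : ∀ n, (if n ∈ α then ({m n} : Finset (Fin p)) else Finset.univ).card =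
        if n ∈ α then 1 else p := by
      intro n; split_ifs <;> simp
    simp_rw [this]
    rw [Finset.prod_ite]
    simp [Finset.filter_not, Finset.card_sdiff]
  · intro j hj
    simp only [Finset.mem_filter, Finset.mem_univ, true_and] at hj
    refine hF _ _ fun n hn => ?_
    rw [← hj]; simp [c, hn]

theorem AdFun_eq {N p : ℕ} (hp : 1 ≤ p)
    (A : Finset (Fin N) → (Fin N → ℝ) → (Fin N → ℝ) → ℝ) (u : (Fin N → ℝ) → ℂ)
    (k : Fin N → ℝ) (hk : k ∈ cube N 1)
    (hi : ∀ α, Integrable (fun x => (A α (mid p k) (proj α (mid p x)) : ℂ) * u (combine α x k)) (muc N)) :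
    AdFun A p u k = TK (fun α k x => A α (mid p k) (proj α (mid p x))) u k := by
  have hp0 : (p:ℂ) ≠ 0 := by exact_mod_cast (by omega : p ≠ 0)
  rw [cube_union hp, Set.mem_iUnion] at hk
  obtain ⟨i, hki⟩ := hk
  unfold AdFun TK
  refine Finset.sum_congr rfl fun α _ => ?_
  rw [Finset.sum_eq_single i]
  rotate_left
  · intro i' _ hii
    refine Finset.sum_eq_zero fun j _ => ?_
    have : k ∉ cubeAt p i' := fun h => Set.disjoint_left.1 (cubeAt_disj hp hii) h hki
    simp [EfunP, this]
  · simp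
  have hR : ∫ x in cube N 1, (A α (mid p k) (proj α (mid p x)) : ℂ) * u (combine α x k) =
      ∑ j : Fin N → Fin p, (A α (aV p i + epsV N p) (proj α (aV p j + epsV N p)) : ℂ) *
        ∫ y in cube N (1/p), u (combine α (aV p j + y) k) := by
    have hi' := hi α
    rw [muc, cube_union hp] at hi'
    rw [cube_union hp, integral_iUnion_fintype (fun b => cubeAt_meas b) (cubeAt_disj hp)
      (fun b => IntegrableOn.mono_set hi' (Set.subset_iUnion _ b))]
    refine Finset.sum_congr rfl fun j _ => ?_
    rw [← int_cubeAt j (fun x => u (combine α x k)), ← integral_const_mul]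
    refine setIntegral_congr_fun (cubeAt_meas j) fun x hx => ?_
    simp only [mid_cubeAt hp j x hx, mid_cubeAt hp i k hki]
  rw [hR, fiber_sum α i (fun j => (A α (aV p i + epsV N p) (proj α (aV p j + epsV N p)) : ℂ) *
        ∫ y in cube N (1/p), u (combine α (aV p j + y) k)), Finset.mul_sum]
  · refine Finset.sum_congr rfl fun j _ => ?_
    rw [EfunP, Set.indicator_of_mem hki, coefA]
    split_ifs with h
    · have h1 : ∀ y, aV p j + combine α y (k - aV p i) = combine α (aV p j + y) k := by
        intro y
        funext n
        by_cases hn : n ∈ α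
        · simp [combine, hn]
        · simp [combine, hn, aV, h n hn]
      simp_rw [h1]
      field_simp
    · simp
  · intro j j' hjj
    have h1 : proj α (aV p j + epsV N p) = proj α (aV p j' + epsV N p) := by
      funext n
      by_cases hn : n ∈ α
      · simp [proj, hn, aV, hjj n hn]
      · simp [proj, hn]
    have h2 : ∀ y, combine α (aV p j + y) k = combine α (aV p j' + y) k := by
      intro y
      funext n
      by_cases hn : n ∈ α
      · simp [combine, hn, aV, hjj n hn]
      · simp [combine, hn]
    simp_rw [h1, h2]

theorem mid_near {N p : ℕ} (hp : 1 ≤ p) (k : Fin N → ℝ) (n : Fin N) :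
    |k n - mid p k n| ≤ 1 / (2 * p) := by
  have hp0 : (0:ℝ) < p := by exact_mod_cast hp
  have h1 := Int.floor_le ((p:ℝ) * k n)
  have h2 := (Int.lt_floor_add_one ((p:ℝ) * k n)).le
  have e : k n - mid p k n = ((p:ℝ) * k n - ⌊(p:ℝ) * k n⌋ - 1/2) / p := by
    simp only [mid]; field_simp; ring
  rw [e, abs_div, abs_of_pos hp0, div_le_div_iff₀ hp0 (by positivity)]
  have : |(p:ℝ) * k n - ⌊(p:ℝ) * k n⌋ - 1/2| ≤ 1/2 := by
    rw [abs_le]; constructor <;> linarith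
  nlinarith

theorem lip_aux {N : ℕ} (A : Finset (Fin N) → (Fin N → ℝ) → (Fin N → ℝ) → ℝ)
    (hdiff : ∀ α, Differentiable ℝ
      (fun q : (Fin N → ℝ) × (Fin N → ℝ) => A α q.1 q.2))
    (hbdd : ∀ α, ∃ C : ℝ, ∀ q : (Fin N → ℝ) × (Fin N → ℝ),
      ‖fderiv ℝ (fun q : (Fin N → ℝ) × (Fin N → ℝ) => A α q.1 q.2) q‖ ≤ C) (α : Finset (Fin N))
    (q r : (Fin N → ℝ) × (Fin N → ℝ)) :
    |A α q.1 q.2 - A α r.1 r.2| ≤ gradNorm A α * ‖q - r‖ := by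
  have := Convex.norm_image_sub_le_of_norm_fderiv_le (𝕜 := ℝ)
    (f := fun q : (Fin N → ℝ) × (Fin N → ℝ) => A α q.1 q.2) (C := gradNorm A α)
    (s := Set.univ) (x := r) (y := q) (fun x _ => (hdiff α) x)
    (fun x _ => by
      obtain ⟨C, hC⟩ := hbdd α
      exact le_ciSup (f := fun q => ‖fderiv ℝ (fun q : (Fin N → ℝ) × (Fin N → ℝ) => A α q.1 q.2) q‖)
        ⟨C, by rintro _ ⟨y, rfl⟩; exact hC y⟩ x)
    convex_univ trivial trivial
  exact this

theorem gradNorm_nonneg {N : ℕ} (A : Finset (Fin N) → (Fin N → ℝ) → (Fin N → ℝ) → ℝ)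
    (α : Finset (Fin N)) : 0 ≤ gradNorm A α := Real.iSup_nonneg fun _ => norm_nonneg _

theorem proj_le {N : ℕ} (α : Finset (Fin N)) (x : Fin N → ℝ) (c : ℝ) (hc : 0 ≤ c)
    (h : ∀ n, |x n| ≤ c) : ‖proj α x‖ ≤ c := by
  rw [pi_norm_le_iff_of_nonneg hc]
  intro n
  rw [Real.norm_eq_abs]
  by_cases hn : n ∈ α <;> simp [proj, hn, h n, hc]

theorem cube_le {N : ℕ} {x : Fin N → ℝ} (hx : x ∈ cube N 1) (n : Fin N) : |x n| ≤ 1 := by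
  have := hx n trivial
  rw [abs_of_nonneg this.1]; exact this.2.le

theorem mid_le {N p : ℕ} (hp : 1 ≤ p) {x : Fin N → ℝ} (hx : x ∈ cube N 1) (n : Fin N) :
    |mid p x n| ≤ 2 := by
  have h1 := cube_le hx n
  have h2 := mid_near hp x n
  have hp1 : (1:ℝ) ≤ p := by exact_mod_cast hp
  have h3 : 1 / (2 * (p:ℝ)) ≤ 1 := by
    rw [div_le_one (by positivity)]; linarith
  rw [abs_le] at *
  constructor <;> linarith

theorem proj_meas {N : ℕ} (α : Finset (Fin N)) : Measurable (proj α) := by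
  refine measurable_pi_lambda _ fun n => ?_
  by_cases hn : n ∈ α
  · simp only [proj, hn, if_true]; fun_prop
  · simp only [proj, hn, if_false]; fun_prop

theorem mid_meas {N p : ℕ} : Measurable (mid p : (Fin N → ℝ) → (Fin N → ℝ)) := by
  refine measurable_pi_lambda _ fun n => ?_
  simp only [mid]
  have : Measurable fun x : Fin N → ℝ => ⌊(p:ℝ) * x n⌋ :=
    Int.measurable_floor.comp ((measurable_pi_apply n).const_mul _)
  have h2 : Measurable fun x : Fin N → ℝ => ((⌊(p:ℝ) * x n⌋ : ℤ) : ℝ) :=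
    (measurable_from_top (f := fun z : ℤ => (z:ℝ))).comp this
  exact (h2.div_const _).add_const _

theorem bdd_aux {N : ℕ} (A : Finset (Fin N) → (Fin N → ℝ) → (Fin N → ℝ) → ℝ)
    (hdiff : ∀ α, Differentiable ℝ
      (fun q : (Fin N → ℝ) × (Fin N → ℝ) => A α q.1 q.2))
    (hbdd : ∀ α, ∃ C : ℝ, ∀ q : (Fin N → ℝ) × (Fin N → ℝ),
      ‖fderiv ℝ (fun q : (Fin N → ℝ) × (Fin N → ℝ) => A α q.1 q.2) q‖ ≤ C) (α : Finset (Fin N))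
    (k x : Fin N → ℝ) (hk : ∀ n, |k n| ≤ 2) (hx : ∀ n, |x n| ≤ 2) :
    |A α k (proj α x)| ≤ |A α 0 0| + gradNorm A α * 2 := by
  have h1 := lip_aux A hdiff hbdd α (k, proj α x) 0
  have h2 : ‖((k, proj α x) : (Fin N → ℝ) × (Fin N → ℝ)) - 0‖ ≤ 2 := by
    rw [sub_zero, Prod.norm_def]
    refine max_le ?_ (proj_le α x 2 (by norm_num) hx)
    exact (pi_norm_le_iff_of_nonneg (by norm_num)).2 hk
  have h3 := mul_le_mul_of_nonneg_left h2 (gradNorm_nonneg A α)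
  have h4 := abs_sub_abs_le_abs_sub (A α k (proj α x)) (A α 0 0)
  simp only [Prod.fst_zero, Prod.snd_zero] at h1
  linarith

theorem selfadjoint_discretization_spectral_estimates (N : ℕ) (hN : 1 ≤ N)
    (A : Finset (Fin N) → (Fin N → ℝ) → (Fin N → ℝ) → ℝ)
    (hdiff : ∀ α, Differentiable ℝ
      (fun q : (Fin N → ℝ) × (Fin N → ℝ) => A α q.1 q.2))
    (hbdd : ∀ α, ∃ C : ℝ, ∀ q : (Fin N → ℝ) × (Fin N → ℝ),
      ‖fderiv ℝ (fun q : (Fin N → ℝ) × (Fin N → ℝ) => A α q.1 q.2) q‖ ≤ C)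
    (hsym : ∀ α (k x : Fin N → ℝ),
      A α k (proj α x) = A α (combine α x k) (proj α k))
    (Ac : Lp ℂ 2 (volume.restrict (cube N 1)) →L[ℂ]
      Lp ℂ 2 (volume.restrict (cube N 1)))
    (hAc : ∀ u : Lp ℂ 2 (volume.restrict (cube N 1)),
      (Ac u : (Fin N → ℝ) → ℂ) =ᵐ[volume.restrict (cube N 1)]
        AcFun A (u : (Fin N → ℝ) → ℂ))
    (Ad : ℕ → (Lp ℂ 2 (volume.restrict (cube N 1)) →L[ℂ]
      Lp ℂ 2 (volume.restrict (cube N 1))))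
    (hAd : ∀ p : ℕ, 1 ≤ p → ∀ u : Lp ℂ 2 (volume.restrict (cube N 1)),
      (Ad p u : (Fin N → ℝ) → ℂ) =ᵐ[volume.restrict (cube N 1)]
        AdFun A p (u : (Fin N → ℝ) → ℂ))
    (p : ℕ) (hp : 1 ≤ p) :
    IsSelfAdjoint (Ad p) ∧
    spectrum ℂ Ac ⊆ Metric.cthickening
      ((N / (2 * p)) * ∑ α : Finset (Fin N), gradNorm A α)
      (spectrum ℂ (Ad p)) ∧
    spectrum ℂ (Ad p) ⊆ Metric.cthickening
      ((N / (2 * p)) * ∑ α : Finset (Fin N), gradNorm A α)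
      (spectrum ℂ Ac) := by
  have hp0 : (0:ℝ) < p := by exact_mod_cast hp
  have hKc : ∀ α, GoodK (fun k x => A α k (proj α x)) := fun α =>
    ⟨(hdiff α).continuous.measurable.comp
      (measurable_fst.prodMk ((proj_meas α).comp measurable_snd)),
      ⟨_, fun k hk x hx => bdd_aux A hdiff hbdd α k x
        (fun n => (cube_le hk n).trans (by norm_num)) (fun n => (cube_le hx n).trans (by norm_num))⟩⟩
  have hKd : ∀ α, GoodK (fun k x => A α (mid p k) (proj α (mid p x))) := fun α =>
    ⟨(hdiff α).continuous.measurable.comp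
      ((mid_meas.comp measurable_fst).prodMk ((proj_meas α).comp (mid_meas.comp measurable_snd))),
      ⟨_, fun k hk x hx => bdd_aux A hdiff hbdd α _ _ (mid_le hp hk) (mid_le hp hx)⟩⟩
  have hTd : ∀ u : Lp ℂ 2 (muc N), (Ad p u : (Fin N → ℝ) → ℂ) =ᵐ[muc N]
      TK (fun α k x => A α (mid p k) (proj α (mid p x))) u := by
    intro u
    filter_upwards [hAd p hp u, ae_all_iff.2 (fun α => int_slice (hKd α) α u),
      ae_restrict_mem (cube_meas N 1)] with k h1 h2 h3
    rw [h1]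
    exact AdFun_eq hp A u k h3 h2
  have hTc : ∀ u : Lp ℂ 2 (muc N), (Ac u : (Fin N → ℝ) → ℂ) =ᵐ[muc N]
      TK (fun α k x => A α k (proj α x)) u := hAc
  have hpc : ∀ (α : Finset (Fin N)) (k x : Fin N → ℝ), proj α (combine α k x) = proj α k := by
    intro α k x
    funext n
    by_cases hn : n ∈ α <;> simp [proj, combine, hn]
  have hmc : ∀ (α : Finset (Fin N)) (k x : Fin N → ℝ),
      mid p (combine α k x) = combine α (mid p k) (mid p x) := by
    intro α k x
    funext n
    by_cases hn : n ∈ α <;> simp [mid, combine, hn]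
  have sac : IsSelfAdjoint Ac := TK_sa hKc (fun α k x => by
    simp only [hpc]; exact (hsym α k x).symm) Ac hTc
  have sad : IsSelfAdjoint (Ad p) := TK_sa hKd (fun α k x => by
    simp only [hmc, hpc]; exact (hsym α _ _).symm) (Ad p) hTd
  have hnorm : ‖Ac - Ad p‖ ≤ (N / (2 * p)) * ∑ α : Finset (Fin N), gradNorm A α := by
    rw [Finset.mul_sum]
    refine TK_diff hKc hKd Ac (Ad p) hTc hTd _
      (fun α => mul_nonneg (by positivity) (gradNorm_nonneg A α)) fun α k hk x hx => ?_
    refine (lip_aux A hdiff hbdd α (k, proj α x) (mid p k, proj α (mid p x))).trans ?_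
    rw [mul_comm]
    refine mul_le_mul_of_nonneg_right ?_ (gradNorm_nonneg A α)
    have h1 : (1:ℝ) / (2 * p) ≤ N / (2 * p) := by
      have : (1:ℝ) ≤ N := by exact_mod_cast hN
      gcongr
    refine le_trans ?_ h1
    rw [Prod.norm_def]
    refine max_le ?_ ?_
    · exact (pi_norm_le_iff_of_nonneg (by positivity)).2 (fun n => mid_near hp k n)
    · have e : ((k, proj α x) - (mid p k, proj α (mid p x))).2 = proj α (x - mid p x) := by
        funext n
        by_cases hn : n ∈ α <;> simp [proj, hn]
      rw [e]
      exact proj_le α _ _ (by positivity) (fun n => mid_near hp x n)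
  have hδ : 0 ≤ (N / (2 * p) : ℝ) * ∑ α : Finset (Fin N), gradNorm A α :=
    (norm_nonneg _).trans hnorm
  exact ⟨sad, spec_aux _ _ sac sad _ hδ hnorm,
    spec_aux _ _ sad sac _ hδ (by rw [norm_sub_rev]; exact hnorm)⟩

end Stmt15
end
end

section
/- Under the setting of the midpoint discretization of the multi-kernel operator with self-adjoint kernels (A_α(k, x_α) = A_α(k_ᾱ + x_α, k_α)), let δ = (N/(2p)) ∑_{α⊆{1,...,N}} ‖∇A_α‖_{L^∞} and suppose the discretization 𝒜 is invertible with δ·‖𝒜⁻¹‖_{L²→L²} < 1. Then the multi-kernel operator 𝒜_c is invertible and ‖𝒜_c⁻¹ − 𝒜⁻¹‖_{L²→L²} ≤ δ‖𝒜⁻¹‖²_{L²→L²} / (1 − δ‖𝒜⁻¹‖_{L²→L²}). -/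
/-!
STATEMENT 16: If moreover the discretization 𝒜 = Ad p is invertible with
δ‖𝒜⁻¹‖ < 1 (δ = (N/(2p)) ∑_α ‖∇A_α‖_{L^∞}), then 𝒜_c is invertible and
‖𝒜_c⁻¹ − 𝒜⁻¹‖ ≤ δ‖𝒜⁻¹‖² / (1 − δ‖𝒜⁻¹‖).
-/

open MeasureTheory Finset

noncomputable section

namespace Stmt16

/-- The half-open cube `[0,h)^N`. -/
def cube (N : ℕ) (h : ℝ) : Set (Fin N → ℝ) := Set.univ.pi fun _ => Set.Ico 0 h

/-- `x_α`: the vector whose `n`-th coordinate is `x n` for `n ∈ α` and `0` for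
`n ∉ α`. -/
def proj {N : ℕ} (α : Finset (Fin N)) (x : Fin N → ℝ) : Fin N → ℝ :=
  fun n => if n ∈ α then x n else 0

/-- `k_ᾱ + x_α`: the point whose coordinates in `α` come from `x` and whose
coordinates outside `α` come from `k`. -/
def combine {N : ℕ} (α : Finset (Fin N)) (x k : Fin N → ℝ) : Fin N → ℝ :=
  fun n => if n ∈ α then x n else k n

/-- The pointwise formula of the multi-kernel operator
`𝒜_c u(k) = ∑_α ∫_{[0,1)^{|α|}} A_α(k, x_α) u(k_ᾱ + x_α) dx_α`.  The partial
integral over the coordinates in `α` is realized as an integral over the whole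
unit cube: the integrand depends only on the coordinates of `x` in `α`, and the
remaining coordinates range over `[0,1)`, contributing a factor `1` each. -/
def AcFun {N : ℕ} (A : Finset (Fin N) → (Fin N → ℝ) → (Fin N → ℝ) → ℝ)
    (u : (Fin N → ℝ) → ℂ) : (Fin N → ℝ) → ℂ :=
  fun k => ∑ α : Finset (Fin N),
    ∫ x in cube N 1, (A α k (proj α x) : ℂ) * u (combine α x k)

/-- `‖∇A_α‖_{L^∞}`: the supremum norm of the (total) derivative of the kernel
`A_α`, as a function of the joint variable `(k, x)`. -/
def gradNorm {N : ℕ} (A : Finset (Fin N) → (Fin N → ℝ) → (Fin N → ℝ) → ℝ)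
    (α : Finset (Fin N)) : ℝ :=
  ⨆ q : (Fin N → ℝ) × (Fin N → ℝ),
    ‖fderiv ℝ (fun q : (Fin N → ℝ) × (Fin N → ℝ) => A α q.1 q.2) q‖

/-- The vertex `a_i = 𝐛/p` of a subcube of the uniform partition of `[0,1)^N`
into `p^N` subcubes; the subcubes are indexed by their digit vectors
`𝐛 ∈ {0,...,p−1}^N` (the base-`p` digits of `i − 1`). -/
def aV {N : ℕ} (p : ℕ) (b : Fin N → Fin p) : Fin N → ℝ := fun n => (b n : ℝ) / p

/-- The midpoint shift `ε = (1/(2p),...,1/(2p))`. -/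
def epsV (N p : ℕ) : Fin N → ℝ := fun _ => 1 / (2 * p)

/-- The subcube `Ω_i = a_i + [0,1/p)^N`. -/
def cubeAt {N : ℕ} (p : ℕ) (b : Fin N → Fin p) : Set (Fin N → ℝ) :=
  {x | x - aV p b ∈ cube N (1 / p)}

/-- The piecewise-constant coefficients
`A_{ij}^α = A_α(a_i + ε, (a_j + ε)_α)` if `(a_i)_ᾱ = (a_j)_ᾱ`, else `0`. -/
def coefA {N : ℕ} (A : Finset (Fin N) → (Fin N → ℝ) → (Fin N → ℝ) → ℝ)
    (p : ℕ) (α : Finset (Fin N)) (i j : Fin N → Fin p) : ℂ :=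
  if ∀ n ∉ α, i n = j n then
    (A α (aV p i + epsV N p) (proj α (aV p j + epsV N p)) : ℂ)
  else 0

/-- The pointwise formula of the scalar elementary operator `𝓔_{ij}^α[c]`
(with `h = 1/p`, `M = 1`):
`(𝓔_{ij}^α[c]u)(x + a_i) = p^{|α|} c ∫_{[0,1/p)^{|α|}} u(x' + a_j) dx'_α`, and
`0` outside `Ω_i`.  The partial integral over the coordinates in `α` is realized
as an integral over the whole cube `[0,1/p)^N` (the integrand does not depend on
the coordinates of `y` outside `α`), compensated by the additional
normalization `p^{N−|α|}`. -/
def EfunP {N : ℕ} (p : ℕ) (i j : Fin N → Fin p) (α : Finset (Fin N)) (c : ℂ)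
    (u : (Fin N → ℝ) → ℂ) : (Fin N → ℝ) → ℂ :=
  (cubeAt p i).indicator fun x =>
    ((p : ℂ) ^ α.card * (p : ℂ) ^ (N - α.card)) * c *
      ∫ y in cube N (1 / p), u (aV p j + combine α y (x - aV p i))

/-- The pointwise formula of the midpoint discretization
`𝒜 = ∑_α ∑_{i,j=1}^{p^N} p^{−|α|} 𝓔_{ij}^α[A_{ij}^α]`. -/
def AdFun {N : ℕ} (A : Finset (Fin N) → (Fin N → ℝ) → (Fin N → ℝ) → ℝ)
    (p : ℕ) (u : (Fin N → ℝ) → ℂ) : (Fin N → ℝ) → ℂ :=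
  fun x => ∑ α : Finset (Fin N), ∑ i : Fin N → Fin p, ∑ j : Fin N → Fin p,
    ((p : ℂ) ^ α.card)⁻¹ * EfunP p i j α (coefA A p α i j) u x

lemma mem_cubeAt {N p : ℕ} (hp : 1 ≤ p) (b : Fin N → Fin p) (x : Fin N → ℝ) :
    x ∈ cubeAt p b ↔ ∀ n, 0 ≤ (p : ℝ) * x n ∧ ⌊(p : ℝ) * x n⌋₊ = (b n : ℕ) := by
  have hp' : (0 : ℝ) < p := by exact_mod_cast hp
  simp only [cubeAt, cube, aV, Set.mem_setOf_eq, Set.mem_univ_pi, Set.mem_Ico, Pi.sub_apply]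
  refine forall_congr' fun n => ?_
  have e1 : 0 ≤ x n - (b n : ℝ) / p ↔ (b n : ℝ) ≤ p * x n := by
    rw [sub_nonneg, div_le_iff₀ hp', mul_comm]
  have e2 : x n - (b n : ℝ) / p < 1 / p ↔ (p : ℝ) * x n < b n + 1 := by
    rw [sub_lt_iff_lt_add, ← add_div, lt_div_iff₀ hp', mul_comm, add_comm]
  rw [e1, e2]
  constructor
  · rintro ⟨h1, h2⟩
    have h0 : 0 ≤ (p : ℝ) * x n := le_trans (by positivity) h1
    exact ⟨h0, (Nat.floor_eq_iff h0).2 ⟨h1, h2⟩⟩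
  · rintro ⟨h0, h⟩
    exact (Nat.floor_eq_iff h0).1 h

lemma cubeAt_disj {N p : ℕ} (hp : 1 ≤ p) (i j : Fin N → Fin p) (x : Fin N → ℝ)
    (hi : x ∈ cubeAt p i) (hj : x ∈ cubeAt p j) : i = j := by
  rw [mem_cubeAt hp] at hi hj
  funext n
  exact Fin.ext ((hi n).2.symm.trans (hj n).2)

lemma cube_eq_iUnion {N p : ℕ} (hp : 1 ≤ p) :
    cube N 1 = ⋃ j : Fin N → Fin p, cubeAt p j := by
  have hp' : (0 : ℝ) < p := by exact_mod_cast hp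
  ext x
  simp only [Set.mem_iUnion, mem_cubeAt hp]
  simp only [cube, Set.mem_univ_pi, Set.mem_Ico]
  constructor
  · intro h
    have hlt : ∀ n, ⌊(p : ℝ) * x n⌋₊ < p := fun n => by
      have h0 : 0 ≤ (p : ℝ) * x n := mul_nonneg hp'.le (h n).1
      rw [Nat.floor_lt h0]
      nlinarith [(h n).2]
    exact ⟨fun n => ⟨_, hlt n⟩, fun n => ⟨mul_nonneg hp'.le (h n).1, rfl⟩⟩
  · rintro ⟨j, hj⟩ n
    obtain ⟨h0, h⟩ := hj n
    refine ⟨nonneg_of_mul_nonneg_right h0 hp', ?_⟩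
    have h1 : (p : ℝ) * x n < p := by
      rw [← Nat.floor_lt h0, h]; exact (j n).2
    nlinarith

lemma measurableSet_cube (N : ℕ) (h : ℝ) : MeasurableSet (cube N h) :=
  MeasurableSet.univ_pi fun _ => measurableSet_Ico

lemma measurableSet_cubeAt {N p : ℕ} (b : Fin N → Fin p) : MeasurableSet (cubeAt p b) :=
  (measurable_id.sub_const (aV p b)) (measurableSet_cube N _)

/-- The uniform measure on the unit cube. -/
abbrev mu (N : ℕ) : Measure (Fin N → ℝ) := volume.restrict (cube N 1)

lemma mu_eq (N : ℕ) :
    mu N = Measure.pi fun _ : Fin N => (volume.restrict (Set.Ico (0 : ℝ) 1)) := by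
  rw [mu, cube, volume_pi, Measure.restrict_pi_pi]

instance isProb_Ico : IsProbabilityMeasure (volume.restrict (Set.Ico (0 : ℝ) 1)) :=
  ⟨by simp⟩

instance isProb_mu (N : ℕ) : IsProbabilityMeasure (mu N) := by
  rw [mu_eq]; infer_instance

lemma measurable_combine {N : ℕ} (α : Finset (Fin N)) :
    Measurable fun q : (Fin N → ℝ) × (Fin N → ℝ) => combine α q.2 q.1 := by
  refine measurable_pi_lambda _ fun n => ?_
  by_cases h : n ∈ α
  · simp only [combine, h, if_true]; fun_prop
  · simp only [combine, h, if_false]; fun_prop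

lemma mp_combine {N : ℕ} (α : Finset (Fin N)) :
    MeasurePreserving (fun q : (Fin N → ℝ) × (Fin N → ℝ) => combine α q.2 q.1)
      ((mu N).prod (mu N)) (mu N) := by
  refine ⟨measurable_combine α, ?_⟩
  rw [mu_eq]
  refine (Measure.pi_eq fun s hs => ?_).symm
  rw [Measure.map_apply (measurable_combine α) (MeasurableSet.univ_pi hs)]
  have : (fun q : (Fin N → ℝ) × (Fin N → ℝ) => combine α q.2 q.1) ⁻¹' (Set.univ.pi s) =
      (Set.univ.pi fun n => if n ∈ α then Set.univ else s n) ×ˢ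
      (Set.univ.pi fun n => if n ∈ α then s n else Set.univ) := by
    ext ⟨k, x⟩
    simp only [Set.mem_preimage, Set.mem_univ_pi, Set.mem_prod, combine, ← forall_and]
    refine forall_congr' fun n => ?_
    by_cases h : n ∈ α <;> simp [h]
  rw [this, Measure.prod_prod, Measure.pi_pi, Measure.pi_pi, ← Finset.prod_mul_distrib]
  refine Finset.prod_congr rfl fun n _ => ?_
  by_cases h : n ∈ α <;> simp [h]

/-- The partial average of the modulus of `u`. -/
def avg {N : ℕ} (α : Finset (Fin N)) (u : (Fin N → ℝ) → ℂ) (k : Fin N → ℝ) : ℝ :=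
  ∫ x in cube N 1, ‖u (combine α x k)‖

lemma sm_comp {N : ℕ} (α : Finset (Fin N)) {u : (Fin N → ℝ) → ℂ} (hu : StronglyMeasurable u) :
    StronglyMeasurable fun q : (Fin N → ℝ) × (Fin N → ℝ) => u (combine α q.2 q.1) :=
  hu.comp_measurable (measurable_combine α)

lemma sm_avg {N : ℕ} (α : Finset (Fin N)) {u : (Fin N → ℝ) → ℂ} (hu : StronglyMeasurable u) :
    StronglyMeasurable (avg α u) :=
  (sm_comp α hu).norm.integral_prod_right' (ν := mu N)

lemma ae_int {N : ℕ} (α : Finset (Fin N)) {u : (Fin N → ℝ) → ℂ} (hu : StronglyMeasurable u)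
    (hu2 : MemLp u 2 (mu N)) :
    ∀ᵐ k ∂(mu N), Integrable (fun x => u (combine α x k)) (mu N) := by
  have h1 : Integrable u (mu N) := hu2.integrable (by norm_num)
  have h2 : Integrable (fun q : (Fin N → ℝ) × (Fin N → ℝ) => u (combine α q.2 q.1))
      ((mu N).prod (mu N)) := (mp_combine α).integrable_comp_of_integrable h1
  exact h2.prod_right_ae

lemma eLpNorm_avg_le {N : ℕ} (α : Finset (Fin N)) {u : (Fin N → ℝ) → ℂ}
    (hu : StronglyMeasurable u) :
    eLpNorm (avg α u) 2 (mu N) ≤ eLpNorm u 2 (mu N) := by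
  rw [eLpNorm_eq_lintegral_rpow_enorm_toReal (by norm_num) (by norm_num),
    eLpNorm_eq_lintegral_rpow_enorm_toReal (by norm_num) (by norm_num)]
  refine ENNReal.rpow_le_rpow ?_ (by positivity)
  have hm : Measurable fun x => ‖u x‖ₑ ^ (2 : ENNReal).toReal := by
    exact hu.enorm.pow_const _
  rw [← (mp_combine α).lintegral_comp hm,
    lintegral_prod (fun q : (Fin N → ℝ) × (Fin N → ℝ) =>
      ‖u (combine α q.2 q.1)‖ₑ ^ (2 : ENNReal).toReal) (hm.comp (measurable_combine α)).aemeasurable]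
  refine lintegral_mono fun k => ?_
  have h1 : ‖avg α u k‖ₑ ≤ eLpNorm (fun x => u (combine α x k)) 1 (mu N) := by
    rw [eLpNorm_one_eq_lintegral_enorm]
    refine (enorm_integral_le_lintegral_enorm _).trans ?_
    simp
  have h2 : eLpNorm (fun x => u (combine α x k)) 1 (mu N) ≤
      eLpNorm (fun x => u (combine α x k)) 2 (mu N) :=
    eLpNorm_le_eLpNorm_of_exponent_le (by norm_num)
      ((sm_comp α hu).comp_measurable measurable_prodMk_left).aestronglyMeasurable
  have h3 := ENNReal.rpow_le_rpow (h1.trans h2) (z := (2 : ENNReal).toReal) (by positivity)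
  refine h3.trans ?_
  rw [eLpNorm_eq_lintegral_rpow_enorm_toReal (by norm_num) (by norm_num), ← ENNReal.rpow_mul]
  simp

section kernel
variable {N : ℕ} {A : Finset (Fin N) → (Fin N → ℝ) → (Fin N → ℝ) → ℝ}

lemma gradNorm_nonneg (α : Finset (Fin N)) : 0 ≤ gradNorm A α :=
  Real.iSup_nonneg fun _ => norm_nonneg _

lemma kernel_lip (α : Finset (Fin N)) (hdiff : Differentiable ℝ
      (fun q : (Fin N → ℝ) × (Fin N → ℝ) => A α q.1 q.2))
    (hbdd : ∃ C : ℝ, ∀ q : (Fin N → ℝ) × (Fin N → ℝ),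
      ‖fderiv ℝ (fun q : (Fin N → ℝ) × (Fin N → ℝ) => A α q.1 q.2) q‖ ≤ C)
    (k x k' x' : Fin N → ℝ) (r : ℝ) (hr : 0 ≤ r) (h1 : ∀ n, |k n - k' n| ≤ r)
    (h2 : ∀ n, |x n - x' n| ≤ r) :
    |A α k x - A α k' x'| ≤ gradNorm A α * r := by
  have h := Convex.norm_image_sub_le_of_norm_fderiv_le (𝕜 := ℝ)
    (f := fun q : (Fin N → ℝ) × (Fin N → ℝ) => A α q.1 q.2) (C := gradNorm A α)
    (s := Set.univ) (x := (k', x')) (y := (k, x)) (fun q _ => hdiff q)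
    (fun q _ => le_ciSup (f := fun q : (Fin N → ℝ) × (Fin N → ℝ) => ‖fderiv ℝ (fun q : (Fin N → ℝ) × (Fin N → ℝ) => A α q.1 q.2) q‖)
      (by obtain ⟨C, hC⟩ := hbdd; exact ⟨C, by rintro _ ⟨q, rfl⟩; exact hC q⟩) q)
    convex_univ trivial trivial
  refine h.trans (mul_le_mul_of_nonneg_left ?_ (gradNorm_nonneg α))
  rw [Prod.mk_sub_mk, Prod.norm_def]
  exact max_le ((pi_norm_le_iff_of_nonneg hr).2 h1) ((pi_norm_le_iff_of_nonneg hr).2 h2)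

lemma dist_mid {p : ℕ} (b : Fin N → Fin p) (x : Fin N → ℝ)
    (hx : x ∈ cubeAt p b) (n : Fin N) : |x n - (aV p b + epsV N p) n| ≤ 1 / (2 * p) := by
  have h := hx n trivial
  simp only [Set.mem_Ico, Pi.sub_apply] at h
  simp only [Pi.add_apply, epsV]
  have : (1 : ℝ) / p = 1 / (2 * p) + 1 / (2 * p) := by ring
  rw [abs_le]
  constructor <;> linarith [h.1, h.2]

/-- Off-`α` independence: summing over all indices versus those agreeing with `i` off `α`. -/
lemma sum_fiber {p : ℕ} (α : Finset (Fin N)) (i : Fin N → Fin p)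
    (f : (Fin N → Fin p) → ℂ)
    (hf : ∀ j j', (∀ n ∈ α, j n = j' n) → f j = f j') :
    ∑ j, f j = (p : ℂ) ^ (N - α.card) * ∑ j, if ∀ n ∉ α, i n = j n then f j else 0 := by
  classical
  let r : (Fin N → Fin p) → (Fin N → Fin p) := fun j n => if n ∈ α then j n else i n
  rw [← Finset.sum_fiberwise (Finset.univ) r f, Finset.mul_sum]
  refine Finset.sum_congr rfl fun j _ => ?_
  have h1 : ∑ j' with r j' = j, f j' = ∑ j' with r j' = j, f j := by
    refine Finset.sum_congr rfl fun j' hj' => hf _ _ fun n hn => ?_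
    have := congrFun (Finset.mem_filter.1 hj').2 n
    simpa [r, hn] using this
  rw [h1, Finset.sum_const, nsmul_eq_mul]
  split_ifs with hij
  · congr 1
    have : (Finset.univ.filter fun j' => r j' = j) =
        Fintype.piFinset fun n => if n ∈ α then {j n} else Finset.univ := by
      ext j'
      simp only [Finset.mem_filter, Finset.mem_univ, true_and, Fintype.mem_piFinset, funext_iff]
      refine forall_congr' fun n => ?_
      by_cases h : n ∈ α
      · simp [r, h]
      · simp [r, h, hij n h]
    rw [this, Fintype.card_piFinset]
    have h2 : ∀ n, (if n ∈ α then ({j n} : Finset (Fin p)) else Finset.univ).card =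
        if n ∈ α then 1 else p := fun n => by split_ifs <;> simp
    simp only [h2]
    rw [Finset.prod_ite]
    simp only [Finset.prod_const_one, one_mul, Finset.prod_const]
    have h3 : (Finset.univ.filter fun n => n ∉ α) = αᶜ := by ext; simp
    rw [h3, Finset.card_compl, Fintype.card_fin]
    push_cast; rfl
  · rw [mul_zero]
    have : (Finset.univ.filter fun j' => r j' = j) = ∅ := by
      rw [Finset.filter_eq_empty_iff]
      rintro j' - rfl
      exact hij fun n hn => by simp [r, hn]
    simp [this]

lemma integral_shift {p : ℕ} (j : Fin N → Fin p) (v : (Fin N → ℝ) → ℂ) :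
    ∫ y in cube N (1 / p), v (aV p j + y) = ∫ x in cubeAt p j, v x := by
  have hmp := measurePreserving_add_left (volume : Measure (Fin N → ℝ)) (aV p j)
  have := hmp.setIntegral_preimage_emb (MeasurableEquiv.addLeft (aV p j)).measurableEmbedding
    v (cubeAt p j)
  rw [← this]
  congr 2
  ext y; simp [cubeAt]

lemma AdFun_eq {p : ℕ} (hp : 1 ≤ p) (u : (Fin N → ℝ) → ℂ) (k : Fin N → ℝ)
    (i : Fin N → Fin p) (hk : k ∈ cubeAt p i) :
    AdFun A p u k = ∑ α : Finset (Fin N), ∑ j : Fin N → Fin p,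
      (A α (aV p i + epsV N p) (proj α (aV p j + epsV N p)) : ℂ) *
        ∫ x in cubeAt p j, u (combine α x k) := by
  have hp' : (p : ℂ) ≠ 0 := by exact_mod_cast (by omega : p ≠ 0)
  unfold AdFun
  refine Finset.sum_congr rfl fun α _ => ?_
  rw [Finset.sum_eq_single i]
  · rw [sum_fiber α i (fun j => (A α (aV p i + epsV N p) (proj α (aV p j + epsV N p)) : ℂ) *
        ∫ x in cubeAt p j, u (combine α x k)), Finset.mul_sum]
    · refine Finset.sum_congr rfl fun j _ => ?_
      rw [EfunP, Set.indicator_of_mem hk, coefA]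
      split_ifs with hij
      · have : ∀ y, aV p j + combine α y (k - aV p i) = combine α (aV p j + y) k := by
          intro y
          funext n
          by_cases h : n ∈ α
          · simp [combine, h]
          · simp [combine, h, aV, hij n h]
        simp only [this]
        rw [integral_shift j fun x => u (combine α x k)]
        field_simp
      · simp
    · intro j j' h
      beta_reduce
      rw [← integral_shift j fun x => u (combine α x k),
        ← integral_shift j' fun x => u (combine α x k)]
      have e1 : proj α (aV p j + epsV N p) = proj α (aV p j' + epsV N p) := by
        funext n
        by_cases hn : n ∈ α
        · simp [proj, hn, aV, h n hn]
        · simp [proj, hn]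
      have e2 : ∀ y, combine α (aV p j + y) k = combine α (aV p j' + y) k := by
        intro y; funext n
        by_cases hn : n ∈ α
        · simp [combine, hn, aV, h n hn]
        · simp [combine, hn]
      simp only [e1, e2]
  · intro i' _ hi'
    refine Finset.sum_eq_zero fun j _ => ?_
    rw [EfunP, Set.indicator_of_notMem, mul_zero]
    exact fun h => hi' (cubeAt_disj hp _ _ k h hk)
  · simp

lemma pointwise_bound {p : ℕ} (hp : 1 ≤ p)
    (hdiff : ∀ α, Differentiable ℝ
      (fun q : (Fin N → ℝ) × (Fin N → ℝ) => A α q.1 q.2))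
    (hbdd : ∀ α, ∃ C : ℝ, ∀ q : (Fin N → ℝ) × (Fin N → ℝ),
      ‖fderiv ℝ (fun q : (Fin N → ℝ) × (Fin N → ℝ) => A α q.1 q.2) q‖ ≤ C)
    (u : (Fin N → ℝ) → ℂ) (k : Fin N → ℝ) (hk : k ∈ cube N 1)
    (hint : ∀ α, Integrable (fun x => u (combine α x k)) (mu N)) :
    ‖AcFun A u k - AdFun A p u k‖ ≤
      ∑ α : Finset (Fin N), gradNorm A α * (1 / (2 * p)) * avg α u k := by
  have hk' := hk
  rw [cube_eq_iUnion hp, Set.mem_iUnion] at hk'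
  obtain ⟨i, hi⟩ := hk'
  rw [AdFun_eq hp u k i hi, AcFun, ← Finset.sum_sub_distrib]
  refine (norm_sum_le _ _).trans (Finset.sum_le_sum fun α _ => ?_)
  have hr : (0 : ℝ) ≤ 1 / (2 * p) := by positivity
  have hsub : ∀ j : Fin N → Fin p, cubeAt p j ⊆ cube N 1 := fun j => by
    rw [cube_eq_iUnion hp]; exact Set.subset_iUnion (fun j => cubeAt p j) j
  have hintj : ∀ j : Fin N → Fin p,
      IntegrableOn (fun x => u (combine α x k)) (cubeAt p j) := fun j =>
    IntegrableOn.mono_set (hint α) (hsub j)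
  have hdisj : Pairwise (Function.onFun Disjoint fun j : Fin N → Fin p => cubeAt p j) := by
    intro j j' hjj
    exact Set.disjoint_left.2 fun x h h' => hjj (cubeAt_disj hp _ _ x h h')
  have hcont : Continuous fun x : Fin N → ℝ => (A α k (proj α x) : ℂ) := by
    refine Complex.continuous_ofReal.comp ((hdiff α).continuous.comp
      (continuous_const.prodMk (?_ : Continuous (proj α))))
    refine continuous_pi fun n => ?_
    by_cases h : n ∈ α
    · simp only [proj, h, if_true]; fun_prop
    · simp only [proj, h, if_false]; fun_prop
  have hclose : ∀ (j : Fin N → Fin p), ∀ x ∈ cubeAt p j,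
      ‖(A α k (proj α x) : ℂ) -
        (A α (aV p i + epsV N p) (proj α (aV p j + epsV N p)) : ℂ)‖ ≤
        gradNorm A α * (1 / (2 * p)) := by
    intro j x hx
    rw [← Complex.ofReal_sub, Complex.norm_real, Real.norm_eq_abs]
    refine kernel_lip α (hdiff α) (hbdd α) _ _ _ _ _ hr (dist_mid i k hi) fun n => ?_
    by_cases h : n ∈ α
    · simpa [proj, h] using dist_mid j x hx n
    · simp only [proj, h, if_false, sub_zero, abs_zero]; exact hr
  have hdint : ∀ j : Fin N → Fin p, IntegrableOn (fun x => ((A α k (proj α x) : ℂ) -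
        (A α (aV p i + epsV N p) (proj α (aV p j + epsV N p)) : ℂ)) * u (combine α x k))
        (cubeAt p j) := by
    intro j
    refine Integrable.bdd_mul (c := gradNorm A α * (1 / (2 * p))) (hintj j)
      (hcont.sub continuous_const).aestronglyMeasurable ?_
    exact (ae_restrict_iff' (measurableSet_cubeAt j)).2 (Filter.Eventually.of_forall (hclose j))
  have hAint : ∀ j : Fin N → Fin p, IntegrableOn
      (fun x => (A α k (proj α x) : ℂ) * u (combine α x k)) (cubeAt p j) := by
    intro j
    have := (hdint j).add ((hintj j).const_mul
      (A α (aV p i + epsV N p) (proj α (aV p j + epsV N p)) : ℂ))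
    refine this.congr (Filter.Eventually.of_forall fun x => ?_)
    simp only [Pi.add_apply]; ring
  have e1 : ∫ x in cube N 1, (A α k (proj α x) : ℂ) * u (combine α x k) =
      ∑ j : Fin N → Fin p, ∫ x in cubeAt p j, (A α k (proj α x) : ℂ) * u (combine α x k) := by
    rw [cube_eq_iUnion hp]
    exact integral_iUnion_fintype measurableSet_cubeAt hdisj hAint
  have e2 : avg α u k = ∑ j : Fin N → Fin p, ∫ x in cubeAt p j, ‖u (combine α x k)‖ := by
    rw [avg, cube_eq_iUnion hp]
    exact integral_iUnion_fintype measurableSet_cubeAt hdisj fun j => (hintj j).norm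
  rw [e1, e2, ← Finset.sum_sub_distrib, Finset.mul_sum]
  refine (norm_sum_le _ _).trans (Finset.sum_le_sum fun j _ => ?_)
  rw [← integral_const_mul, ← integral_sub (hAint j) ((hintj j).const_mul _),
    ← integral_const_mul]
  refine norm_integral_le_of_norm_le ((hintj j).norm.const_mul _) ?_
  refine (ae_restrict_iff' (measurableSet_cubeAt j)).2 (Filter.Eventually.of_forall fun x hx => ?_)
  rw [← sub_mul, norm_mul]
  exact mul_le_mul_of_nonneg_right (hclose j x hx) (norm_nonneg _)

lemma op_bound (hN : 1 ≤ N) {p : ℕ} (hp : 1 ≤ p)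
    (hdiff : ∀ α, Differentiable ℝ
      (fun q : (Fin N → ℝ) × (Fin N → ℝ) => A α q.1 q.2))
    (hbdd : ∀ α, ∃ C : ℝ, ∀ q : (Fin N → ℝ) × (Fin N → ℝ),
      ‖fderiv ℝ (fun q : (Fin N → ℝ) × (Fin N → ℝ) => A α q.1 q.2) q‖ ≤ C)
    (Ac Ad : Lp ℂ 2 (mu N) →L[ℂ] Lp ℂ 2 (mu N))
    (hAc : ∀ u : Lp ℂ 2 (mu N), (Ac u : (Fin N → ℝ) → ℂ) =ᵐ[mu N] AcFun A u)
    (hAd : ∀ u : Lp ℂ 2 (mu N), (Ad u : (Fin N → ℝ) → ℂ) =ᵐ[mu N] AdFun A p u) :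
    ‖Ac - Ad‖ ≤ (N / (2 * p)) * ∑ α : Finset (Fin N), gradNorm A α := by
  have hG : 0 ≤ ∑ α : Finset (Fin N), gradNorm A α :=
    Finset.sum_nonneg fun α _ => gradNorm_nonneg α
  refine ContinuousLinearMap.opNorm_le_bound _ (by positivity) fun u => ?_
  have hu := Lp.stronglyMeasurable u
  have hu2 := Lp.memLp u
  let c : Finset (Fin N) → ℝ := fun α => gradNorm A α * (1 / (2 * p))
  have hc : ∀ α, 0 ≤ c α := fun α => mul_nonneg (gradNorm_nonneg α) (by positivity)
  have hav : ∀ α, MemLp (avg α u) 2 (mu N) := fun α =>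
    ⟨(sm_avg α hu).aestronglyMeasurable, (eLpNorm_avg_le α hu).trans_lt hu2.2⟩
  let g : Finset (Fin N) → Lp ℝ 2 (mu N) := fun α => c α • (hav α).toLp
  have hgn : ∀ α, ‖g α‖ ≤ c α * ‖u‖ := by
    intro α
    rw [norm_smul, Real.norm_of_nonneg (hc α)]
    refine mul_le_mul_of_nonneg_left ?_ (hc α)
    rw [Lp.norm_toLp, Lp.norm_def]
    exact ENNReal.toReal_mono hu2.2.ne (eLpNorm_avg_le α hu)
  have hgco : (∑ α, g α : Lp ℝ 2 (mu N)) =ᵐ[mu N] fun k => ∑ α, c α * avg α u k := by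
    have h1 := Lp.coeFn_finsetSum Finset.univ g
    have h2 : ∀ᵐ k ∂(mu N), ∀ α, g α k = c α * avg α u k := by
      rw [ae_all_iff]
      intro α
      filter_upwards [Lp.coeFn_smul (c α) (hav α).toLp, (hav α).coeFn_toLp] with k h3 h4
      rw [h3, Pi.smul_apply, h4, smul_eq_mul]
    filter_upwards [h1, h2] with k h1 h2
    rw [h1]
    simp [h2]
  have key : ‖(Ac - Ad) u‖ ≤ ‖∑ α, g α‖ := by
    refine Lp.norm_le_norm_of_ae_le ?_
    have hk : ∀ᵐ k ∂(mu N), k ∈ cube N 1 := ae_restrict_mem (measurableSet_cube N 1)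
    have hint : ∀ᵐ k ∂(mu N), ∀ α, Integrable (fun x => u (combine α x k)) (mu N) :=
      ae_all_iff.2 fun α => ae_int α hu hu2
    rw [ContinuousLinearMap.sub_apply]
    filter_upwards [hAc u, hAd u, hk, hint, hgco, Lp.coeFn_sub (Ac u) (Ad u)]
      with k h1 h2 h3 h4 h5 h6
    rw [h6, Pi.sub_apply, h1, h2, h5]
    exact (pointwise_bound hp hdiff hbdd u k h3 h4).trans (le_abs_self _)
  refine key.trans ((norm_sum_le _ _).trans ((Finset.sum_le_sum fun α _ => hgn α).trans ?_))
  rw [← Finset.sum_mul, ← Finset.sum_mul]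
  refine mul_le_mul_of_nonneg_right ?_ (norm_nonneg _)
  rw [mul_comm]
  refine mul_le_mul_of_nonneg_right ?_ hG
  have : (1 : ℝ) ≤ N := by exact_mod_cast hN
  gcongr

end kernel

lemma neumann {R : Type*} [NormedRing R] [HasSummableGeomSeries R] (a b c : R) (δ : ℝ)
    (hδ : ‖a - b‖ ≤ δ) (h1 : b * c = 1) (h2 : c * b = 1) (hs : δ * ‖c‖ < 1) :
    IsUnit a ∧ ∀ d : R, a * d = 1 → d * a = 1 →
      ‖d - c‖ ≤ δ * ‖c‖ ^ 2 / (1 - δ * ‖c‖) := by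
  constructor
  · have hn : ‖c * (b - a)‖ < 1 := by
      refine lt_of_le_of_lt ((norm_mul_le _ _).trans ?_) hs
      rw [mul_comm, norm_sub_rev]
      exact mul_le_mul_of_nonneg_right hδ (norm_nonneg _)
    have hu := isUnit_one_sub_of_norm_lt_one hn
    have hb : IsUnit b := ⟨⟨b, c, h1, h2⟩, rfl⟩
    have : a = b * (1 - c * (b - a)) := by
      rw [mul_sub, mul_one, ← mul_assoc, h1, one_mul]; abel
    rw [this]
    exact hb.mul hu
  · intro d _ hd2
    have e : d - c = d * (b - a) * c := by
      rw [mul_sub, sub_mul, mul_assoc, h1, hd2, mul_one, one_mul]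
    have hX : ‖d - c‖ ≤ ‖d‖ * δ * ‖c‖ := by
      rw [e]
      refine (norm_mul_le _ _).trans (mul_le_mul_of_nonneg_right ?_ (norm_nonneg _))
      refine (norm_mul_le _ _).trans (mul_le_mul_of_nonneg_left ?_ (norm_nonneg _))
      rwa [norm_sub_rev]
    have hd : ‖d‖ ≤ ‖c‖ + ‖d - c‖ := by
      have := norm_add_le c (d - c)
      rwa [add_sub_cancel] at this
    have hδ0 : 0 ≤ δ := (norm_nonneg _).trans hδ
    rw [le_div_iff₀ (by linarith)]
    have := mul_le_mul_of_nonneg_right hd (mul_nonneg hδ0 (norm_nonneg c))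
    nlinarith

/-- **Corollary 2 of the paper, inverse part.** Under the
assumptions of the discretization theorem with self-adjoint kernels, if the
discretization `𝒜 = Ad p` is invertible (with two-sided inverse `Ainv`) and
`δ·‖𝒜⁻¹‖ < 1` where `δ = (N/(2p)) ∑_α ‖∇A_α‖_{L^∞}`, then the multi-kernel
operator `𝒜_c` is invertible and every two-sided inverse `Acinv` of `𝒜_c`
satisfies `‖𝒜_c⁻¹ − 𝒜⁻¹‖ ≤ δ‖𝒜⁻¹‖²/(1 − δ‖𝒜⁻¹‖)`. -/
theorem inverse_approximation_bound (N : ℕ) (hN : 1 ≤ N)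
    (A : Finset (Fin N) → (Fin N → ℝ) → (Fin N → ℝ) → ℝ)
    (hdiff : ∀ α, Differentiable ℝ
      (fun q : (Fin N → ℝ) × (Fin N → ℝ) => A α q.1 q.2))
    (hbdd : ∀ α, ∃ C : ℝ, ∀ q : (Fin N → ℝ) × (Fin N → ℝ),
      ‖fderiv ℝ (fun q : (Fin N → ℝ) × (Fin N → ℝ) => A α q.1 q.2) q‖ ≤ C)
    (hsym : ∀ α (k x : Fin N → ℝ),
      A α k (proj α x) = A α (combine α x k) (proj α k))
    (Ac : Lp ℂ 2 (volume.restrict (cube N 1)) →L[ℂ]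
      Lp ℂ 2 (volume.restrict (cube N 1)))
    (hAc : ∀ u : Lp ℂ 2 (volume.restrict (cube N 1)),
      (Ac u : (Fin N → ℝ) → ℂ) =ᵐ[volume.restrict (cube N 1)]
        AcFun A (u : (Fin N → ℝ) → ℂ))
    (Ad : ℕ → (Lp ℂ 2 (volume.restrict (cube N 1)) →L[ℂ]
      Lp ℂ 2 (volume.restrict (cube N 1))))
    (hAd : ∀ p : ℕ, 1 ≤ p → ∀ u : Lp ℂ 2 (volume.restrict (cube N 1)),
      (Ad p u : (Fin N → ℝ) → ℂ) =ᵐ[volume.restrict (cube N 1)]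
        AdFun A p (u : (Fin N → ℝ) → ℂ))
    (p : ℕ) (hp : 1 ≤ p)
    (Ainv : Lp ℂ 2 (volume.restrict (cube N 1)) →L[ℂ]
      Lp ℂ 2 (volume.restrict (cube N 1)))
    (hAinv₁ : Ad p * Ainv = 1) (hAinv₂ : Ainv * Ad p = 1)
    (hsmall : ((N / (2 * p)) * ∑ α : Finset (Fin N), gradNorm A α) * ‖Ainv‖ < 1) :
    IsUnit Ac ∧
    ∀ Acinv : Lp ℂ 2 (volume.restrict (cube N 1)) →L[ℂ]
        Lp ℂ 2 (volume.restrict (cube N 1)),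
      Ac * Acinv = 1 → Acinv * Ac = 1 →
      ‖Acinv - Ainv‖ ≤
        ((N / (2 * p)) * ∑ α : Finset (Fin N), gradNorm A α) * ‖Ainv‖ ^ 2 /
          (1 - ((N / (2 * p)) * ∑ α : Finset (Fin N), gradNorm A α) * ‖Ainv‖) := by
  exact neumann Ac (Ad p) Ainv _
    (op_bound hN hp hdiff hbdd Ac (Ad p) hAc (hAd p hp)) hAinv₁ hAinv₂ hsmall

end Stmt16
end
end

section
/- Let S ≥ 1, let χ_i be the indicator function of [(i−1)/S, i/S) ⊂ [0,1) for i = 1,...,S, let A_i, B_{ij} ∈ ℂ, and let 𝒜 : L²([0,1)) → L²([0,1)) be the operator 𝒜u(x) = A(x)u(x) + ∫₀¹ B(x,y)u(y)dy with A(x) = ∑_{i=1}^S A_i χ_i(x) and B(x,y) = S ∑_{i,j=1}^S B_{ij} χ_i(x)χ_j(y). Put 𝐀 = diag(A_1,...,A_S) and 𝐁 = (B_{ij})_{i,j=1}^S. Then 𝒜 is invertible if and only if both matrices 𝐀 and 𝐀 + 𝐁 are invertible, and in that case 𝒜⁻¹u(x) = χᵀ(x)𝐀⁻¹χ(x)u(x)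 + S ∫₀¹ χᵀ(x)((𝐀+𝐁)⁻¹ − 𝐀⁻¹)χ(y)u(y)dy, where χ(x) = (χ_1(x),...,χ_S(x))ᵀ. -/
/-!
STATEMENT 17: The operator 𝒜u(x) = A(x)u(x) + ∫₀¹B(x,y)u(y)dy on L²([0,1))
with S-step multiplier A and S-step kernel B is invertible iff the matrices
𝐀 = diag(A_i) and 𝐀 + 𝐁 (𝐁 = (B_{ij})) are invertible, in which case
𝒜⁻¹u(x) = χᵀ(x)𝐀⁻¹χ(x)u(x) + S∫₀¹ χᵀ(x)((𝐀+𝐁)⁻¹ − 𝐀⁻¹)χ(y)u(y)dy.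
-/

open MeasureTheory Finset

noncomputable section

namespace Stmt17

/-- The step function `χ_i`, the indicator of the `i`-th subinterval of `[0,1)`
of length `1/S` (the subintervals are indexed by `i = 0,...,S−1`). -/
def chi (S : ℕ) (i : Fin S) (x : ℝ) : ℂ :=
  if x ∈ Set.Ico ((i : ℝ) / S) (((i : ℝ) + 1) / S) then (1 : ℂ) else 0

/-- The pointwise formula of the operator
`𝒜u(x) = A(x)u(x) + ∫₀¹ B(x,y)u(y)dy` with the `S`-step multiplier
`A(x) = ∑_i A_i χ_i(x)` and the `S`-step kernel
`B(x,y) = S ∑_{i,j} B_{ij} χ_i(x) χ_j(y)`. -/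
def Tformula (S : ℕ) (A : Fin S → ℂ) (B : Fin S → Fin S → ℂ)
    (u : ℝ → ℂ) : ℝ → ℂ :=
  fun x => (∑ i, A i * chi S i x) * u x +
    ∫ y in Set.Ico (0 : ℝ) 1,
      ((S : ℂ) * ∑ i, ∑ j, B i j * chi S i x * chi S j y) * u y

abbrev mu : Measure ℝ := volume.restrict (Set.Ico (0 : ℝ) 1)

lemma chi_nat (S : ℕ) (hS : 1 ≤ S) (i : Fin S) (x : ℝ) (hx : 0 ≤ x) :
    chi S i x = if (i : ℕ) = ⌊x * S⌋₊ then 1 else 0 := by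
  have h0 : (0 : ℝ) < S := by exact_mod_cast hS
  unfold chi
  congr 1
  rw [Set.mem_Ico, div_le_iff₀ h0, lt_div_iff₀ h0, eq_comm (a := (i : ℕ)),
    Nat.floor_eq_iff (by positivity)]

lemma exists_idx (S : ℕ) (hS : 1 ≤ S) (x : ℝ) (hx : x ∈ Set.Ico (0 : ℝ) 1) :
    ∃ i : Fin S, ∀ k, chi S k x = if k = i then 1 else 0 := by
  have h0 : (0 : ℝ) < S := by exact_mod_cast hS
  have hlt : ⌊x * S⌋₊ < S := by
    rw [Nat.floor_lt (mul_nonneg hx.1 h0.le)]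
    nlinarith [hx.2]
  refine ⟨⟨_, hlt⟩, fun k => ?_⟩
  rw [chi_nat S hS k x hx.1]
  simp [Fin.ext_iff]

lemma chi_mul_eq (S : ℕ) (i : Fin S) (u : ℝ → ℂ) :
    (fun x => chi S i x * u x) =
      (Set.Ico ((i : ℝ) / S) (((i : ℝ) + 1) / S)).indicator u := by
  ext x
  by_cases h : x ∈ Set.Ico ((i : ℝ) / S) (((i : ℝ) + 1) / S)
  · simp only [chi, if_pos h, Set.indicator_of_mem h, one_mul]
  · simp only [chi, if_neg h, Set.indicator_of_notMem h, zero_mul]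

lemma memLp_chi_mul (S : ℕ) (i : Fin S) {u : ℝ → ℂ} (hu : MemLp u 2 mu) :
    MemLp (fun x => chi S i x * u x) 2 mu := by
  rw [chi_mul_eq]
  exact hu.indicator measurableSet_Ico

lemma memLp_chi (S : ℕ) (i : Fin S) : MemLp (chi S i) 2 mu := by
  simpa using memLp_chi_mul S i (memLp_const (1 : ℂ))

lemma int_of {u : ℝ → ℂ} (hu : MemLp u 2 mu) : Integrable u mu :=
  hu.integrable (by norm_num)

def mv (S : ℕ) (u : ℝ → ℂ) : Fin S → ℂ := fun j => S * ∫ y, chi S j y * u y ∂mu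

lemma mv_congr (S : ℕ) {u v : ℝ → ℂ} (h : u =ᵐ[mu] v) : mv S u = mv S v := by
  ext j
  unfold mv
  congr 1
  apply integral_congr_ae
  filter_upwards [h] with x hx
  rw [hx]

lemma mv_add (S : ℕ) {u v : ℝ → ℂ} (hu : MemLp u 2 mu) (hv : MemLp v 2 mu) :
    mv S (fun x => u x + v x) = mv S u + mv S v := by
  ext j
  simp only [mv, Pi.add_apply, mul_add]
  rw [integral_add (int_of (memLp_chi_mul S j hu)) (int_of (memLp_chi_mul S j hv))]
  ring

lemma integral_chi (S : ℕ) (hS : 1 ≤ S) (i : Fin S) : S * ∫ y, chi S i y ∂mu = 1 := by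
  have h0 : (0 : ℝ) < S := by exact_mod_cast hS
  have h := chi_mul_eq S i (fun _ => 1)
  simp only [mul_one] at h
  have h2 : (∫ y, chi S i y ∂mu) = ∫ y, (Set.Ico ((i : ℝ) / S) (((i : ℝ) + 1) / S)).indicator
      (fun _ => (1 : ℂ)) y ∂mu := by rw [← h]
  have hi : (i : ℝ) + 1 ≤ S := by exact_mod_cast i.2
  have hsub : Set.Ico ((i : ℝ) / S) (((i : ℝ) + 1) / S) ⊆ Set.Ico 0 1 := by
    intro x hx
    exact ⟨le_trans (by positivity) hx.1, lt_of_lt_of_le hx.2 ((div_le_one h0).2 hi)⟩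
  rw [h2, integral_indicator measurableSet_Ico, Measure.restrict_restrict measurableSet_Ico,
    Set.inter_eq_left.2 hsub]
  have h3 : ((i : ℝ) + 1) / S - i / S = 1 / S := by ring
  have h4 : (S : ℂ) ≠ 0 := by exact_mod_cast h0.ne'
  simp [Measure.real, h3]
  field_simp

lemma ae_idx (S : ℕ) (hS : 1 ≤ S) :
    ∀ᵐ x ∂mu, ∃ i : Fin S, ∀ k, chi S k x = if k = i then 1 else 0 := by
  filter_upwards [ae_restrict_mem measurableSet_Ico] with x hx
  exact exists_idx S hS x hx

lemma mv_step_mul (S : ℕ) (hS : 1 ≤ S) (c : Fin S → ℂ) (u : ℝ → ℂ) :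
    mv S (fun x => (∑ i, c i * chi S i x) * u x) = fun j => c j * mv S u j := by
  ext j
  unfold mv
  rw [mul_left_comm, ← integral_const_mul (c j)]
  congr 1
  apply integral_congr_ae
  filter_upwards [ae_idx S hS] with x ⟨i, hi⟩
  simp only [hi]
  by_cases h : j = i <;> simp [h]

lemma mv_step (S : ℕ) (hS : 1 ≤ S) (c : Fin S → ℂ) :
    mv S (fun x => ∑ i, c i * chi S i x) = c := by
  have := mv_step_mul S hS c (fun _ => 1)
  simp only [mul_one] at this
  rw [this]
  ext j
  simp only [mv, mul_one, integral_chi S hS j]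

lemma memLp_step (S : ℕ) (c : Fin S → ℂ) : MemLp (fun x => ∑ i, c i * chi S i x) 2 mu :=
  memLp_finsetSum _ fun i _ => (memLp_chi S i).const_mul (c i)

lemma memLp_step_mul (S : ℕ) (c : Fin S → ℂ) {u : ℝ → ℂ} (hu : MemLp u 2 mu) :
    MemLp (fun x => (∑ i, c i * chi S i x) * u x) 2 mu := by
  simp only [Finset.sum_mul, mul_assoc]
  exact memLp_finsetSum _ fun i _ => (memLp_chi_mul S i hu).const_mul (c i)

lemma Tf_eq (S : ℕ) (A : Fin S → ℂ) (B : Fin S → Fin S → ℂ) {u : ℝ → ℂ} (hu : MemLp u 2 mu) :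
    Tformula S A B u = fun x => (∑ i, A i * chi S i x) * u x +
      ∑ i, (Matrix.of B).mulVec (mv S u) i * chi S i x := by
  ext x
  unfold Tformula
  congr 1
  have : ∀ y, ((S : ℂ) * ∑ i, ∑ j, B i j * chi S i x * chi S j y) * u y =
      ∑ i, ∑ j, (S * B i j * chi S i x) * (chi S j y * u y) := by
    intro y
    rw [Finset.mul_sum, Finset.sum_mul]
    refine Finset.sum_congr rfl fun i _ => ?_
    rw [Finset.mul_sum, Finset.sum_mul]
    refine Finset.sum_congr rfl fun j _ => ?_
    ring
  simp only [this]
  have hint : ∀ i j, Integrable (fun y => (S * B i j * chi S i x) * (chi S j y * u y)) mu :=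
    fun i j => (int_of (memLp_chi_mul S j hu)).const_mul _
  rw [integral_finsetSum _ fun i _ => integrable_finsetSum _ fun j _ => hint i j]
  refine Finset.sum_congr rfl fun i _ => ?_
  rw [integral_finsetSum _ fun j _ => hint i j, Matrix.mulVec, dotProduct, Finset.sum_mul]
  refine Finset.sum_congr rfl fun j _ => ?_
  rw [integral_const_mul, mv, Matrix.of_apply]
  ring

lemma Tf_memLp (S : ℕ) (A : Fin S → ℂ) (B : Fin S → Fin S → ℂ) {u : ℝ → ℂ}
    (hu : MemLp u 2 mu) : MemLp (Tformula S A B u) 2 mu := by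
  rw [Tf_eq S A B hu]
  exact (memLp_step_mul S A hu).add (memLp_step S _)

lemma Tf_congr (S : ℕ) (A : Fin S → ℂ) (B : Fin S → Fin S → ℂ) {u v : ℝ → ℂ}
    (h : u =ᵐ[mu] v) : Tformula S A B u =ᵐ[mu] Tformula S A B v := by
  filter_upwards [h] with x hx
  unfold Tformula
  rw [hx]
  congr 1
  apply integral_congr_ae
  filter_upwards [h] with y hy
  rw [hy]

lemma mv_Tf (S : ℕ) (hS : 1 ≤ S) (A : Fin S → ℂ) (B : Fin S → Fin S → ℂ) {u : ℝ → ℂ}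
    (hu : MemLp u 2 mu) :
    mv S (Tformula S A B u) = (Matrix.diagonal A + Matrix.of B).mulVec (mv S u) := by
  rw [Tf_eq S A B hu, mv_add S (memLp_step_mul S A hu) (memLp_step S _), mv_step_mul S hS,
    mv_step S hS, Matrix.add_mulVec]
  congr 1
  ext j
  rw [Matrix.mulVec_diagonal]

lemma Tf_comp (S : ℕ) (hS : 1 ≤ S) (A A' : Fin S → ℂ) (B B' : Matrix (Fin S) (Fin S) ℂ)
    (h1 : ∀ i, A' i * A i = 1)
    (h2 : Matrix.diagonal A' * B + B' * (Matrix.diagonal A + B) = 0) {u : ℝ → ℂ}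
    (hu : MemLp u 2 mu) :
    Tformula S A' B' (Tformula S A B u) =ᵐ[mu] u := by
  filter_upwards [ae_idx S hS] with x ⟨i, hi⟩
  rw [Tf_eq S A' B' (Tf_memLp S A B hu), mv_Tf S hS A B hu, Tf_eq S A B hu]
  have h3 := congrFun (congrArg (fun M => Matrix.mulVec M (mv S u)) h2) i
  simp only [Matrix.add_mulVec, ← Matrix.mulVec_mulVec, Matrix.zero_mulVec, Pi.add_apply,
    Matrix.mulVec_diagonal, Pi.zero_apply] at h3
  have e1 : (Matrix.of B : Matrix (Fin S) (Fin S) ℂ) = B := rfl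
  have e2 : (Matrix.of B' : Matrix (Fin S) (Fin S) ℂ) = B' := rfl
  simp only [hi, mul_ite, mul_one, mul_zero, Finset.sum_ite_eq', Finset.mem_univ, if_true, e1, e2,
    Matrix.add_mulVec]
  linear_combination h3 + u x * h1 i

lemma diag_inv {S : ℕ} {A : Fin S → ℂ} (h : ∀ i, A i ≠ 0) :
    (Matrix.diagonal A)⁻¹ = Matrix.diagonal (fun i => (A i)⁻¹) := by
  apply Matrix.inv_eq_left_inv
  rw [Matrix.diagonal_mul_diagonal, ← Matrix.diagonal_one]
  congr 1
  ext i
  exact inv_mul_cancel₀ (h i)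

lemma diag_unit {S : ℕ} {A : Fin S → ℂ} :
    IsUnit (Matrix.diagonal A) ↔ ∀ i, A i ≠ 0 := by
  rw [Matrix.isUnit_diagonal, Pi.isUnit_iff]
  simp

/-- inverse kernel matrix -/
def Cm (S : ℕ) (A : Fin S → ℂ) (B : Fin S → Fin S → ℂ) : Matrix (Fin S) (Fin S) ℂ :=
  (Matrix.diagonal A + Matrix.of B)⁻¹ - (Matrix.diagonal A)⁻¹

lemma left_inv (S : ℕ) (hS : 1 ≤ S) (A : Fin S → ℂ) (B : Fin S → Fin S → ℂ)
    (hA : ∀ i, A i ≠ 0) (hB : IsUnit (Matrix.diagonal A + Matrix.of B)) {u : ℝ → ℂ}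
    (hu : MemLp u 2 mu) :
    Tformula S (fun i => (A i)⁻¹) (Cm S A B) (Tformula S A B u) =ᵐ[mu] u := by
  refine Tf_comp S hS A _ (Matrix.of B) _ (fun i => inv_mul_cancel₀ (hA i)) ?_ hu
  have hA' := (Matrix.isUnit_iff_isUnit_det _).1 (diag_unit.2 hA)
  rw [Cm, ← diag_inv hA, sub_mul,
    Matrix.nonsing_inv_mul _ ((Matrix.isUnit_iff_isUnit_det _).1 hB), mul_add,
    Matrix.nonsing_inv_mul _ hA']
  abel

lemma right_inv (S : ℕ) (hS : 1 ≤ S) (A : Fin S → ℂ) (B : Fin S → Fin S → ℂ)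
    (hA : ∀ i, A i ≠ 0) (hB : IsUnit (Matrix.diagonal A + Matrix.of B)) {u : ℝ → ℂ}
    (hu : MemLp u 2 mu) :
    Tformula S A B (Tformula S (fun i => (A i)⁻¹) (Cm S A B) u) =ᵐ[mu] u := by
  refine Tf_comp S hS _ A _ (Matrix.of B) (fun i => mul_inv_cancel₀ (hA i)) ?_ hu
  have hA' := (Matrix.isUnit_iff_isUnit_det _).1 (diag_unit.2 hA)
  rw [Cm, ← diag_inv hA, add_sub_cancel]
  have := Matrix.mul_nonsing_inv _ ((Matrix.isUnit_iff_isUnit_det _).1 hB)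
  rw [mul_sub, Matrix.mul_nonsing_inv _ hA', sub_add_eq_add_sub, ← add_mul, this, sub_self]

lemma chi_double (S : ℕ) (hS : 1 ≤ S) (j : Fin S) (i : Fin S) (x : ℝ) (hx : 0 ≤ x) (b : ℕ)
    (hb : b < 2) :
    chi S j x * chi (2 * S) ⟨2 * i + b, by omega⟩ x =
      if j = i then chi (2 * S) ⟨2 * i + b, by omega⟩ x else 0 := by
  rw [chi_nat S hS j x hx, chi_nat (2 * S) (by omega) _ x hx]
  have : ⌊x * S⌋₊ = ⌊x * ((2 * S : ℕ) : ℝ)⌋₊ / 2 := by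
    rw [← Nat.floor_div_natCast]
    congr 1
    push_cast
    ring
  rw [this]
  simp only [Fin.ext_iff]
  split_ifs <;> first | omega | simp

/-- Haar function on the `i`-th interval -/
def haar (S : ℕ) (i : Fin S) (x : ℝ) : ℂ :=
  chi (2 * S) ⟨2 * i + 0, by omega⟩ x - chi (2 * S) ⟨2 * i + 1, by omega⟩ x

lemma haar_memLp (S : ℕ) (i : Fin S) : MemLp (haar S i) 2 mu :=
  (memLp_chi _ _).sub (memLp_chi _ _)

lemma chi_haar (S : ℕ) (hS : 1 ≤ S) (j : Fin S) (i : Fin S) (x : ℝ) (hx : 0 ≤ x) :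
    chi S j x * haar S i x = if j = i then haar S i x else 0 := by
  unfold haar
  rw [mul_sub, chi_double S hS j i x hx 0 (by omega), chi_double S hS j i x hx 1 (by omega)]
  split_ifs <;> simp

lemma integral_haar (S : ℕ) (hS : 1 ≤ S) (i : Fin S) : ∫ x, haar S i x ∂mu = 0 := by
  unfold haar
  rw [integral_sub (int_of (memLp_chi _ _)) (int_of (memLp_chi _ _))]
  have h0 : ((2 * S : ℕ) : ℂ) ≠ 0 := by
    have : 2 * S ≠ 0 := by omega
    exact_mod_cast this
  apply mul_left_cancel₀ h0
  rw [mul_sub, integral_chi (2 * S) (by omega), integral_chi (2 * S) (by omega)]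
  simp

lemma mv_haar (S : ℕ) (hS : 1 ≤ S) (i : Fin S) : mv S (haar S i) = 0 := by
  ext j
  have : ∫ y, chi S j y * haar S i y ∂mu = ∫ y, (if j = i then haar S i y else 0) ∂mu := by
    apply integral_congr_ae
    filter_upwards [ae_restrict_mem measurableSet_Ico] with x hx
    exact chi_haar S hS j i x hx.1
  rw [mv, this]
  by_cases h : j = i
  · simp [h, integral_haar S hS]
  · simp [h]

lemma haar_ne (S : ℕ) (hS : 1 ≤ S) (i : Fin S) (h : haar S i =ᵐ[mu] fun _ => 0) : False := by
  have h1 := integral_chi (2 * S) (by omega) ⟨2 * i + 0, by omega⟩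
  have : ∫ y, chi (2 * S) ⟨2 * i + 0, by omega⟩ y ∂mu = ∫ y, (0 : ℂ) ∂mu := by
    apply integral_congr_ae
    filter_upwards [h, ae_restrict_mem measurableSet_Ico] with x hx hx'
    rw [haar, chi_nat (2 * S) (by omega) _ x hx'.1, chi_nat (2 * S) (by omega) _ x hx'.1] at hx
    rw [chi_nat (2 * S) (by omega) _ x hx'.1]
    simp only at hx ⊢
    split_ifs at hx ⊢ <;> first | omega | simp_all
  rw [this] at h1
  simp at h1

lemma ker_triv (S : ℕ) (A : Fin S → ℂ) (B : Fin S → Fin S → ℂ)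
    (T : Lp ℂ 2 mu →L[ℂ] Lp ℂ 2 mu)
    (hT : ∀ u : Lp ℂ 2 mu, (T u : ℝ → ℂ) =ᵐ[mu] Tformula S A B (u : ℝ → ℂ))
    (hinj : Function.Injective T) {u : ℝ → ℂ} (hu : MemLp u 2 mu)
    (h : Tformula S A B u =ᵐ[mu] fun _ => 0) : u =ᵐ[mu] fun _ => 0 := by
  have h1 : T (hu.toLp u) = 0 := by
    rw [Lp.eq_zero_iff_ae_eq_zero]
    exact (hT _).trans ((Tf_congr S A B hu.coeFn_toLp).trans h)
  have h2 : hu.toLp u = 0 := hinj (by rw [h1, map_zero])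
  exact hu.coeFn_toLp.symm.trans ((Lp.eq_zero_iff_ae_eq_zero).1 h2)

lemma unit_iff (S : ℕ) (hS : 1 ≤ S) (A : Fin S → ℂ) (B : Fin S → Fin S → ℂ)
    (T : Lp ℂ 2 mu →L[ℂ] Lp ℂ 2 mu)
    (hT : ∀ u : Lp ℂ 2 mu, (T u : ℝ → ℂ) =ᵐ[mu] Tformula S A B (u : ℝ → ℂ)) :
    IsUnit T ↔
      (IsUnit (Matrix.diagonal A) ∧ IsUnit (Matrix.diagonal A + Matrix.of B)) := by
  rw [ContinuousLinearMap.isUnit_iff_bijective, diag_unit]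
  constructor
  · rintro ⟨hinj, -⟩
    constructor
    · intro i hi
      apply haar_ne S hS i
      apply ker_triv S A B T hT hinj (haar_memLp S i)
      rw [Tf_eq S A B (haar_memLp S i), mv_haar S hS]
      filter_upwards [ae_restrict_mem measurableSet_Ico] with x hx
      simp only [Matrix.mulVec_zero, Pi.zero_apply, zero_mul, Finset.sum_const_zero, add_zero,
        Finset.sum_mul, mul_assoc, chi_haar S hS _ i x hx.1]
      simp [hi]
    · rw [← Matrix.mulVec_injective_iff_isUnit]
      refine (injective_iff_map_eq_zero (Matrix.mulVecLin (Matrix.diagonal A + Matrix.of B))).2 ?_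
      intro c hc
      rw [Matrix.mulVecLin_apply] at hc
      have h := ker_triv S A B T hT hinj (memLp_step S c) (by
        rw [Tf_eq S A B (memLp_step S c), mv_step S hS]
        filter_upwards [ae_idx S hS] with x ⟨i, hi⟩
        have := congrFun hc i
        simp only [Matrix.add_mulVec, Pi.add_apply, Matrix.mulVec_diagonal] at this
        simpa [hi] using this)
      rw [← mv_step S hS c, mv_congr S h]
      ext j
      simp [mv]
  · rintro ⟨hA, hB⟩
    constructor
    · intro u v huv
      apply Lp.ext
      have h1 := (hT u).symm.trans ((by rw [huv] : (T u : ℝ → ℂ) =ᵐ[mu] T v).trans (hT v))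
      exact (left_inv S hS A B hA hB (Lp.memLp u)).symm.trans ((Tf_congr S _ _ h1).trans
        (left_inv S hS A B hA hB (Lp.memLp v)))
    · intro u
      have hm := Tf_memLp S (fun i => (A i)⁻¹) (Cm S A B) (Lp.memLp u)
      refine ⟨hm.toLp _, ?_⟩
      apply Lp.ext
      exact (hT _).trans ((Tf_congr S _ _ hm.coeFn_toLp).trans
        (right_inv S hS A B hA hB (Lp.memLp u)))

/-- Invertibility criterion and explicit inverse for the
extended Fredholm operator with `S`-step data. -/
theorem fredholm_step_inverse (S : ℕ) (hS : 1 ≤ S)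
    (A : Fin S → ℂ) (B : Fin S → Fin S → ℂ)
    (T : Lp ℂ 2 (volume.restrict (Set.Ico (0 : ℝ) 1)) →L[ℂ]
      Lp ℂ 2 (volume.restrict (Set.Ico (0 : ℝ) 1)))
    (hT : ∀ u : Lp ℂ 2 (volume.restrict (Set.Ico (0 : ℝ) 1)),
      (T u : ℝ → ℂ) =ᵐ[volume.restrict (Set.Ico (0 : ℝ) 1)]
        Tformula S A B (u : ℝ → ℂ)) :
    (IsUnit T ↔
      (IsUnit (Matrix.diagonal A) ∧ IsUnit (Matrix.diagonal A + Matrix.of B))) ∧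
    (∀ Tinv : Lp ℂ 2 (volume.restrict (Set.Ico (0 : ℝ) 1)) →L[ℂ]
        Lp ℂ 2 (volume.restrict (Set.Ico (0 : ℝ) 1)),
      T * Tinv = 1 → Tinv * T = 1 →
      ∀ u : Lp ℂ 2 (volume.restrict (Set.Ico (0 : ℝ) 1)),
        (Tinv u : ℝ → ℂ) =ᵐ[volume.restrict (Set.Ico (0 : ℝ) 1)]
          fun x =>
            (∑ i, ∑ j, chi S i x * (Matrix.diagonal A)⁻¹ i j * chi S j x) *
                (u : ℝ → ℂ) x +
              ∫ y in Set.Ico (0 : ℝ) 1,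
                ((S : ℂ) * ∑ i, ∑ j, chi S i x *
                    ((Matrix.diagonal A + Matrix.of B)⁻¹ -
                      (Matrix.diagonal A)⁻¹) i j * chi S j y) *
                  (u : ℝ → ℂ) y) := by
  refine ⟨unit_iff S hS A B T hT, ?_⟩
  intro Tinv h1 h2 u
  have hU : IsUnit T := ⟨⟨T, Tinv, h1, h2⟩, rfl⟩
  obtain ⟨hA, hB⟩ := (unit_iff S hS A B T hT).1 hU
  rw [diag_unit] at hA
  have h3 : T (Tinv u) = u := by
    have := congrArg (fun L => L u) h1
    simpa using this
  have h4 : (u : ℝ → ℂ) =ᵐ[mu] Tformula S A B (Tinv u) := by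
    have := hT (Tinv u)
    rwa [h3] at this
  have h5 := (left_inv S hS A B hA hB (Lp.memLp (Tinv u))).symm.trans
    (Tf_congr S (fun i => (A i)⁻¹) (Cm S A B) h4.symm)
  refine h5.trans ?_
  filter_upwards [ae_idx S hS] with x ⟨i, hi⟩
  unfold Tformula
  congr 1
  · rw [diag_inv hA]
    simp [hi]
  · apply integral_congr_ae
    refine Filter.Eventually.of_forall fun y => ?_
    simp only [Cm, mul_comm (chi S _ x)]

end Stmt17
end
end

section
/- Let S ≥ 1, let χ_i be the indicator function of [(i−1)/S, i/S) ⊂ [0,1), let A_i, B_{ij} ∈ ℂ, and let 𝒜 : L²([0,1)) → L²([0,1)) be the operator 𝒜u(x) = A(x)u(x) + ∫₀¹ B(x,y)u(y)dy with A(x) = ∑_{i=1}^S A_i χ_i(x) and B(x,y) = S ∑_{i,j=1}^S B_{ij} χ_i(x)χ_j(y). Put 𝐀 = diag(A_1,...,A_S) and 𝐁 = (B_{ij})_{i,j=1}^S. Then the spectrum of the bounded operator 𝒜 equals the union of the set of eigenvalues of the matrix 𝐀 and the set of eigenvalues of the matrix 𝐀 + 𝐁. -/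
/-!
STATEMENT 18: The spectrum of the operator 𝒜u(x) = A(x)u(x) + ∫₀¹B(x,y)u(y)dy
on L²([0,1)) with S-step data equals the union of the set of eigenvalues of
𝐀 = diag(A_i) and the set of eigenvalues of 𝐀 + 𝐁 (𝐁 = (B_{ij})).
-/

open MeasureTheory Finset

noncomputable section

namespace Stmt18

/-- The step function `χ_i`, the indicator of the `i`-th subinterval of `[0,1)`
of length `1/S` (the subintervals are indexed by `i = 0,...,S−1`). -/
def chi (S : ℕ) (i : Fin S) (x : ℝ) : ℂ :=
  if x ∈ Set.Ico ((i : ℝ) / S) (((i : ℝ) + 1) / S) then (1 : ℂ) else 0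

/-- The pointwise formula of the operator
`𝒜u(x) = A(x)u(x) + ∫₀¹ B(x,y)u(y)dy` with the `S`-step multiplier
`A(x) = ∑_i A_i χ_i(x)` and the `S`-step kernel
`B(x,y) = S ∑_{i,j} B_{ij} χ_i(x) χ_j(y)`. -/
def Tformula (S : ℕ) (A : Fin S → ℂ) (B : Fin S → Fin S → ℂ)
    (u : ℝ → ℂ) : ℝ → ℂ :=
  fun x => (∑ i, A i * chi S i x) * u x +
    ∫ y in Set.Ico (0 : ℝ) 1,
      ((S : ℂ) * ∑ i, ∑ j, B i j * chi S i x * chi S j y) * u y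

theorem abs_bij {S : ℕ} {V : Type*} [AddCommGroup V] [Module ℂ V]
    (A : Fin S → ℂ) (B : Fin S → Fin S → ℂ)
    (P : Fin S → V →ₗ[ℂ] V) (φ : Fin S → V →ₗ[ℂ] ℂ) (e w : Fin S → V)
    (hP1 : ∀ u, ∑ i, P i u = u) (hPP : ∀ i j u, P i (P j u) = if i = j then P i u else 0)
    (hPe : ∀ i j, P i (e j) = if i = j then e j else 0)
    (hφP : ∀ i j u, φ i (P j u) = if i = j then φ i u else 0)
    (hφe : ∀ i j, φ i (e j) = if i = j then 1 else 0)
    (hw : ∀ k, w k ≠ 0) (hPw : ∀ k, P k (w k) = w k) (hφw : ∀ k, φ k (w k) = 0)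
    (T : V → V) (hT : ∀ u, T u = ∑ i, A i • P i u + ∑ i, (∑ j, B i j * φ j u) • e i)
    (R : V →ₗ[ℂ] V) (z : ℂ) (hR : ∀ u, R u = z • u - T u) :
    Function.Bijective R ↔ ((Matrix.diagonal A - z • (1 : Matrix (Fin S) (Fin S) ℂ)).det ≠ 0 ∧
      (Matrix.diagonal A + Matrix.of B -
        z • (1 : Matrix (Fin S) (Fin S) ℂ)).det ≠ 0) := by
  have hdet : (Matrix.diagonal A - z • (1 : Matrix (Fin S) (Fin S) ℂ)).det = ∏ i, (A i - z) := by
    rw [← Matrix.det_diagonal]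
    congr 1
    ext i j
    by_cases h : i = j <;> simp [Matrix.diagonal, Matrix.one_apply, h]
  set M := (Matrix.diagonal A + Matrix.of B - z • (1 : Matrix (Fin S) (Fin S) ℂ)) with hM
  have hMv : ∀ (c : Fin S → ℂ) i, M.mulVec c i = (A i - z) * c i + ∑ j, B i j * c j := by
    intro c i
    rw [hM, Matrix.sub_mulVec, Matrix.add_mulVec]
    simp [Matrix.mulVec_diagonal, Matrix.smul_mulVec]
    simp [Matrix.mulVec, dotProduct]
    ring
  -- components
  have hPR : ∀ u i, P i (R u) = (z - A i) • P i u - (∑ j, B i j * φ j u) • e i := by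
    intro u i
    rw [hR, hT]
    simp [map_sum, hPP, hPe, sub_smul]
    abel
  have hφR : ∀ u i, φ i (R u) = - M.mulVec (fun j => φ j u) i := by
    intro u i
    rw [hR, hT, hMv]
    simp [map_sum, hφP, hφe]
    ring
  have hPinj : ∀ u v, (∀ i, P i u = P i v) → u = v := by
    intro u v h
    rw [← hP1 u, ← hP1 v]
    exact Finset.sum_congr rfl fun i _ => h i
  rw [hdet, Finset.prod_ne_zero_iff]
  constructor
  · rintro ⟨hinj, -⟩
    have hk : ∀ u, R u = 0 → u = 0 := fun u h => hinj (by rw [h, map_zero])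
    constructor
    · intro k _ hz
      apply hw k
      apply hk
      have hPk : ∀ i, P i (w k) = if i = k then w k else 0 := by
        intro i
        rw [← hPw k, hPP]
        split_ifs with h
        · subst h; rfl
        · rfl
      have hφk : ∀ i, φ i (w k) = 0 := by
        intro i
        rw [← hPw k, hφP]
        split_ifs with h
        · subst h; exact hφw _
        · rfl
      apply hPinj
      intro i
      rw [hPR, hPk]
      simp only [hφk]
      split_ifs with h
      · subst h
        simp [← neg_sub (A i) z, hz]
      · simp
    · intro h0
      obtain ⟨v, hv, hv0⟩ := Matrix.exists_mulVec_eq_zero_iff.2 h0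
      apply hv
      have hφs : ∀ j, φ j (∑ i, v i • e i) = v j := by
        intro j; simp [map_sum, hφe]
      have : (∑ i, v i • e i) = 0 := by
        apply hk
        apply hPinj
        intro i
        rw [hPR]
        simp only [hφs]
        have := congrFun hv0 i
        rw [hMv] at this
        simp only [map_sum, map_smul, hPe, map_zero]
        simp only [smul_ite, smul_zero, Finset.sum_ite_eq, Finset.mem_univ, if_true]
        rw [smul_smul, ← sub_smul]
        have h2 : (z - A i) * v i - ∑ j, B i j * v j = 0 := by
          simp only [Pi.zero_apply] at this
          linear_combination -this
        rw [h2, zero_smul]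
      ext j
      rw [← hφs j, this, map_zero]; rfl
  · rintro ⟨hA, hMd⟩
    have hA' : ∀ i, z - A i ≠ 0 := fun i h => hA i (Finset.mem_univ _) (by linear_combination -h)
    constructor
    · rw [injective_iff_map_eq_zero]
      intro u hu
      have hφ0 : (fun j => φ j u) = 0 := by
        apply Matrix.eq_zero_of_mulVec_eq_zero hMd
        ext i
        have := hφR u i
        rw [hu, map_zero] at this
        simpa using this.symm
      apply hPinj
      intro i
      have := hPR u i
      rw [hu] at this
      have h3 : ∀ j, φ j u = 0 := fun j => congrFun hφ0 j
      simp only [h3, map_zero] at this ⊢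
      simp only [mul_zero, Finset.sum_const_zero, zero_smul, sub_zero] at this
      exact (smul_eq_zero.1 this.symm).resolve_left (hA' i)
    · intro f
      set c : Fin S → ℂ := - M⁻¹.mulVec (fun j => φ j f) with hc
      have hMc : ∀ i, (A i - z) * c i + ∑ j, B i j * c j = - φ i f := by
        intro i
        rw [← hMv, hc, Matrix.mulVec_neg, Matrix.mulVec_mulVec,
          Matrix.mul_nonsing_inv _ (isUnit_iff_ne_zero.2 hMd)]
        simp
      refine ⟨∑ i, (z - A i)⁻¹ • (P i f + (∑ j, B i j * c j) • e i), ?_⟩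
      have hφu : ∀ k, φ k (∑ i, (z - A i)⁻¹ • (P i f + (∑ j, B i j * c j) • e i)) = c k := by
        intro k
        simp [map_sum, hφP, hφe, mul_add, Finset.sum_add_distrib]
        have := hMc k
        have := hA' k
        field_simp
        linear_combination hMc k
      apply hPinj
      intro k
      rw [hPR]
      simp only [hφu]
      simp [map_sum, hPP, hPe, Finset.sum_add_distrib, smul_smul]
      have := hA' k
      rw [mul_inv_cancel_left₀ this, mul_inv_cancel₀ this]
      simp

abbrev mu : Measure ℝ := volume.restrict (Set.Ico (0 : ℝ) 1)

abbrev E2 := Lp ℂ 2 mu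

def Pind (s : Set ℝ) (hs : MeasurableSet s) : E2 →ₗ[ℂ] E2 where
  toFun u := ((Lp.memLp u).indicator hs).toLp _
  map_add' u v := by
    rw [← MemLp.toLp_add, MemLp.toLp_eq_toLp_iff]
    filter_upwards [Lp.coeFn_add u v] with x hx
    by_cases h : x ∈ s
    · rw [Pi.add_apply, Set.indicator_of_mem h, Set.indicator_of_mem h, Set.indicator_of_mem h, hx,
        Pi.add_apply]
    · simp [h]
  map_smul' c u := by
    rw [RingHom.id_apply, ← MemLp.toLp_const_smul, MemLp.toLp_eq_toLp_iff]
    filter_upwards [Lp.coeFn_smul c u] with x hx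
    by_cases h : x ∈ s
    · rw [Pi.smul_apply, Set.indicator_of_mem h, Set.indicator_of_mem h, hx, Pi.smul_apply]
    · simp [h]

theorem Pind_coe (s : Set ℝ) (hs : MeasurableSet s) (u : E2) :
    (Pind s hs u : ℝ → ℂ) =ᵐ[mu] s.indicator u := by
  have h : Pind s hs u = ((Lp.memLp u).indicator hs).toLp _ := rfl
  rw [h]
  exact MemLp.coeFn_toLp _

theorem E2_int (u : E2) : Integrable (u : ℝ → ℂ) mu :=
  (Lp.memLp u).integrable (by norm_num)

def Jint : E2 →ₗ[ℂ] ℂ where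
  toFun u := ∫ x, u x ∂mu
  map_add' u v := by
    rw [← integral_add (E2_int u) (E2_int v)]
    exact integral_congr_ae (Lp.coeFn_add u v)
  map_smul' c u := by
    rw [RingHom.id_apply, ← integral_smul]
    exact integral_congr_ae (Lp.coeFn_smul c u)

def ind (s : Set ℝ) (hs : MeasurableSet s) (c : ℂ) : E2 :=
  indicatorConstLp 2 hs (measure_ne_top mu s) c

theorem ind_coe (s : Set ℝ) (hs : MeasurableSet s) (c : ℂ) :
    (ind s hs c : ℝ → ℂ) =ᵐ[mu] s.indicator fun _ => c := indicatorConstLp_coeFn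

theorem Jint_ind (s : Set ℝ) (hs : MeasurableSet s) (c : ℂ) :
    Jint (ind s hs c) = mu.real s * c := by
  change ∫ x, ind s hs c x ∂mu = _
  rw [integral_congr_ae (ind_coe s hs c), integral_indicator hs]
  simp

theorem mu_Ico (a b : ℝ) (ha : 0 ≤ a) (hab : a ≤ b) (hb : b ≤ 1) :
    mu.real (Set.Ico a b) = b - a := by
  rw [Measure.real, Measure.restrict_apply measurableSet_Ico, Set.inter_eq_left.2]
  · rw [Real.volume_Ico, ENNReal.toReal_ofReal (by linarith)]
  · exact Set.Ico_subset_Ico ha hb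

theorem Pind_comp (s t : Set ℝ) (hs : MeasurableSet s) (ht : MeasurableSet t) (u : E2) :
    Pind s hs (Pind t ht u) = Pind (s ∩ t) (hs.inter ht) u := by
  apply Lp.ext
  filter_upwards [Pind_coe s hs (Pind t ht u), Pind_coe t ht u,
    Pind_coe (s ∩ t) (hs.inter ht) u] with x h1 h2 h3
  rw [h1, h3, ← Set.indicator_indicator]
  by_cases h : x ∈ s <;> simp [h, h2]

theorem Pind_ind (s t : Set ℝ) (hs : MeasurableSet s) (ht : MeasurableSet t) (c : ℂ) :
    Pind s hs (ind t ht c) = ind (s ∩ t) (hs.inter ht) c := by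
  apply Lp.ext
  filter_upwards [Pind_coe s hs (ind t ht c), ind_coe t ht c,
    ind_coe (s ∩ t) (hs.inter ht) c] with x h1 h2 h3
  rw [h1, h3, ← Set.indicator_indicator]
  by_cases h : x ∈ s <;> simp [h, h2]

theorem Pind_empty (u : E2) : Pind ∅ MeasurableSet.empty u = 0 := by
  apply Lp.ext
  filter_upwards [Pind_coe ∅ MeasurableSet.empty u, Lp.coeFn_zero ℂ 2 mu] with x h1 h2
  rw [h1, h2]; simp

theorem ind_empty (c : ℂ) : ind ∅ MeasurableSet.empty c = 0 := by
  apply Lp.ext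
  filter_upwards [ind_coe ∅ MeasurableSet.empty c, Lp.coeFn_zero ℂ 2 mu] with x h1 h2
  rw [h1, h2]; simp

theorem Pind_congr {s t : Set ℝ} (hs : MeasurableSet s) (ht : MeasurableSet t) (h : s = t)
    (u : E2) : Pind s hs u = Pind t ht u := by subst h; rfl

theorem ind_congr {s t : Set ℝ} (hs : MeasurableSet s) (ht : MeasurableSet t) (h : s = t)
    (c : ℂ) : ind s hs c = ind t ht c := by subst h; rfl

def II (S : ℕ) (i : Fin S) : Set ℝ := Set.Ico ((i : ℝ) / S) (((i : ℝ) + 1) / S)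

theorem II_meas (S : ℕ) (i : Fin S) : MeasurableSet (II S i) := measurableSet_Ico

theorem mem_II {S : ℕ} (hS : 1 ≤ S) (i : Fin S) (x : ℝ) (hx : 0 ≤ x) :
    x ∈ II S i ↔ ⌊(S : ℝ) * x⌋₊ = (i : ℕ) := by
  have h : (0 : ℝ) < S := by exact_mod_cast hS
  rw [II, Set.mem_Ico, Nat.floor_eq_iff (by positivity), div_le_iff₀ h, lt_div_iff₀ h, mul_comm]

theorem II_inter {S : ℕ} (hS : 1 ≤ S) (i j : Fin S) (h : i ≠ j) : II S i ∩ II S j = ∅ := by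
  ext x
  simp only [Set.mem_inter_iff, Set.mem_empty_iff_false, iff_false, not_and]
  intro h1 h2
  have hx : 0 ≤ x := le_trans (by positivity) h1.1
  rw [mem_II hS _ _ hx] at h1 h2
  exact h (Fin.ext (h1.symm.trans h2))

theorem chi_mul (S : ℕ) (i : Fin S) (x : ℝ) (u : ℝ → ℂ) :
    chi S i x * u x = (II S i).indicator u x := by
  unfold chi II
  by_cases h : x ∈ Set.Ico ((i : ℝ) / S) (((i : ℝ) + 1) / S)
  · rw [if_pos h, Set.indicator_of_mem h, one_mul]
  · rw [if_neg h, Set.indicator_of_notMem h, zero_mul]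

theorem sum_chi {S : ℕ} (hS : 1 ≤ S) (x : ℝ) (hx : x ∈ Set.Ico (0 : ℝ) 1) (u : ℝ → ℂ) :
    ∑ i, (II S i).indicator u x = u x := by
  have h : (0 : ℝ) < S := by exact_mod_cast hS
  have hlt : ⌊(S : ℝ) * x⌋₊ < S := by
    rw [Nat.floor_lt (by have := hx.1; positivity)]
    nlinarith [hx.2]
  rw [Finset.sum_eq_single ⟨_, hlt⟩]
  · exact Set.indicator_of_mem ((mem_II hS _ _ hx.1).2 rfl) _
  · intro b _ hb
    apply Set.indicator_of_notMem
    rw [mem_II hS _ _ hx.1]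
    intro h'
    exact hb (Fin.ext h'.symm)
  · simp

theorem coe_sum {ι : Type*} (s : Finset ι) (f : ι → E2) :
    ((∑ i ∈ s, f i : E2) : ℝ → ℂ) =ᵐ[mu] fun x => ∑ i ∈ s, f i x := by
  classical
  induction s using Finset.induction_on with
  | empty =>
    rw [Finset.sum_empty]
    filter_upwards [Lp.coeFn_zero ℂ 2 mu] with x hx
    rw [hx, Finset.sum_empty]; rfl
  | insert a s ha ih =>
    rw [Finset.sum_insert ha]
    filter_upwards [Lp.coeFn_add (f a) (∑ i ∈ s, f i), ih] with x h1 h2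
    rw [h1, Finset.sum_insert ha, Pi.add_apply, h2]

theorem Tform_eq (S : ℕ) (A : Fin S → ℂ) (B : Fin S → Fin S → ℂ) (u : E2) (x : ℝ) :
    Tformula S A B u x = ∑ i, A i * (II S i).indicator u x +
      ∑ i, (∑ j, B i j * Jint (Pind (II S j) (II_meas S j) u)) *
        (II S i).indicator (fun _ => (S : ℂ)) x := by
  unfold Tformula
  congr 1
  · rw [Finset.sum_mul]
    refine Finset.sum_congr rfl fun i _ => ?_
    rw [mul_assoc, chi_mul]
  · have hJ : ∀ j, Jint (Pind (II S j) (II_meas S j) u) = ∫ y, (II S j).indicator u y ∂mu :=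
      fun j => integral_congr_ae (Pind_coe _ _ u)
    have hi : ∀ j, Integrable ((II S j).indicator (u : ℝ → ℂ)) mu :=
      fun j => (E2_int u).indicator (II_meas S j)
    have : ∀ y, ((S : ℂ) * ∑ i, ∑ j, B i j * chi S i x * chi S j y) * u y =
        ∑ i, ∑ j, (B i j * (II S i).indicator (fun _ => (S : ℂ)) x) *
          (II S j).indicator u y := by
      intro y
      rw [Finset.mul_sum, Finset.sum_mul]
      refine Finset.sum_congr rfl fun i _ => ?_
      rw [Finset.mul_sum, Finset.sum_mul]
      refine Finset.sum_congr rfl fun j _ => ?_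
      rw [← chi_mul, ← chi_mul]
      ring
    simp only [this]
    rw [integral_finsetSum _ fun i _ => integrable_finsetSum _ fun j _ => (hi j).const_mul _]
    refine Finset.sum_congr rfl fun i _ => ?_
    rw [integral_finsetSum _ fun j _ => (hi j).const_mul _, Finset.sum_mul]
    refine Finset.sum_congr rfl fun j _ => ?_
    rw [integral_const_mul, hJ]
    ring

def H1 (S : ℕ) (i : Fin S) : Set ℝ := Set.Ico ((i : ℝ) / S) (((i : ℝ) + 1 / 2) / S)
def H2 (S : ℕ) (i : Fin S) : Set ℝ := Set.Ico (((i : ℝ) + 1 / 2) / S) (((i : ℝ) + 1) / S)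

theorem H1_meas (S : ℕ) (i : Fin S) : MeasurableSet (H1 S i) := measurableSet_Ico
theorem H2_meas (S : ℕ) (i : Fin S) : MeasurableSet (H2 S i) := measurableSet_Ico

/-- `sp(𝒜)` is the union of the eigenvalue sets (roots of the
characteristic polynomials) of the matrices `𝐀` and `𝐀 + 𝐁`. -/
theorem fredholm_step_spectrum (S : ℕ) (hS : 1 ≤ S)
    (A : Fin S → ℂ) (B : Fin S → Fin S → ℂ)
    (T : Lp ℂ 2 (volume.restrict (Set.Ico (0 : ℝ) 1)) →L[ℂ]
      Lp ℂ 2 (volume.restrict (Set.Ico (0 : ℝ) 1)))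
    (hT : ∀ u : Lp ℂ 2 (volume.restrict (Set.Ico (0 : ℝ) 1)),
      (T u : ℝ → ℂ) =ᵐ[volume.restrict (Set.Ico (0 : ℝ) 1)]
        Tformula S A B (u : ℝ → ℂ)) :
    spectrum ℂ T =
      {z : ℂ | (Matrix.diagonal A - z • (1 : Matrix (Fin S) (Fin S) ℂ)).det = 0} ∪
      {z : ℂ | (Matrix.diagonal A + Matrix.of B -
        z • (1 : Matrix (Fin S) (Fin S) ℂ)).det = 0} := by
  have hS0 : (0 : ℝ) < S := by exact_mod_cast hS
  have hSC : (S : ℂ) ≠ 0 := by exact_mod_cast hS0.ne'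
  have hle : ∀ i : Fin S, (i : ℝ) + 1 ≤ S := fun i => by exact_mod_cast i.2
  have hm : ∀ (i : Fin S) (a b : ℝ), 0 ≤ a → a ≤ b → b ≤ 1 →
      mu.real (Set.Ico (((i : ℝ) + a) / S) (((i : ℝ) + b) / S)) = (b - a) / S := by
    intro i a b ha hab hb
    rw [mu_Ico]
    · ring
    · positivity
    · gcongr
    · rw [div_le_one hS0]; linarith [hle i]
  have hmI : ∀ i : Fin S, mu.real (II S i) = 1 / S := by
    intro i; have := hm i 0 1 (by norm_num) (by norm_num) (by norm_num)
    simpa [II] using this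
  have hmH1 : ∀ i : Fin S, mu.real (H1 S i) = (1 / 2) / S := by
    intro i; have := hm i 0 (1 / 2) (by norm_num) (by norm_num) (by norm_num)
    simpa [H1] using this
  have hmH2 : ∀ i : Fin S, mu.real (H2 S i) = (1 / 2) / S := by
    intro i; have := hm i (1 / 2) 1 (by norm_num) (by norm_num) (by norm_num)
    rw [H2, this]; norm_num
  have hsub1 : ∀ i : Fin S, II S i ∩ H1 S i = H1 S i := by
    intro i
    refine Set.inter_eq_right.2 (Set.Ico_subset_Ico le_rfl ?_)
    gcongr; norm_num
  have hsub2 : ∀ i : Fin S, II S i ∩ H2 S i = H2 S i := by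
    intro i
    refine Set.inter_eq_right.2 (Set.Ico_subset_Ico ?_ le_rfl)
    gcongr; norm_num
  have hdisj : ∀ i : Fin S, H1 S i ∩ H2 S i = ∅ := by
    intro i
    ext x
    simp only [H1, H2, Set.mem_inter_iff, Set.mem_Ico, Set.mem_empty_iff_false, iff_false]
    rintro ⟨⟨_, h1⟩, h2, _⟩
    exact absurd h1 (not_lt.2 h2)
  let P : Fin S → E2 →ₗ[ℂ] E2 := fun i => Pind (II S i) (II_meas S i)
  have hPP : ∀ i j u, P i (P j u) = if i = j then P i u else 0 := by
    intro i j u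
    change Pind _ _ (Pind _ _ u) = _
    rw [Pind_comp]
    split_ifs with h
    · subst h
      exact Pind_congr _ _ (Set.inter_self _) u
    · rw [Pind_congr _ MeasurableSet.empty (II_inter hS i j h), Pind_empty]
  have hPe : ∀ i j, P i (ind (II S j) (II_meas S j) S) =
      if i = j then ind (II S j) (II_meas S j) S else 0 := by
    intro i j
    change Pind _ _ _ = _
    rw [Pind_ind]
    split_ifs with h
    · subst h
      exact ind_congr _ _ (Set.inter_self _) _
    · rw [ind_congr _ MeasurableSet.empty (II_inter hS i j h), ind_empty]
  have hPw : ∀ k, P k (ind (H1 S k) (H1_meas S k) 1 - ind (H2 S k) (H2_meas S k) 1) =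
      ind (H1 S k) (H1_meas S k) 1 - ind (H2 S k) (H2_meas S k) 1 := by
    intro k
    change Pind _ _ _ = _
    rw [map_sub, Pind_ind, Pind_ind, ind_congr _ (H1_meas S k) (hsub1 k),
      ind_congr _ (H2_meas S k) (hsub2 k)]
  ext z
  have key := abs_bij A B P (fun i => Jint ∘ₗ P i)
    (fun i => ind (II S i) (II_meas S i) S)
    (fun k => ind (H1 S k) (H1_meas S k) 1 - ind (H2 S k) (H2_meas S k) 1)
    (by
      intro u
      apply Lp.ext
      have hall : ∀ᵐ x ∂mu, ∀ i, (P i u : ℝ → ℂ) x = (II S i).indicator u x :=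
        ae_all_iff.2 fun i => Pind_coe _ _ u
      filter_upwards [coe_sum Finset.univ fun i => P i u, hall,
        ae_restrict_mem measurableSet_Ico] with x h1 h2 h3
      rw [h1, ← sum_chi hS x h3 u]
      exact Finset.sum_congr rfl fun i _ => h2 i)
    hPP hPe
    (by
      intro i j u
      simp only [LinearMap.comp_apply, hPP]
      split_ifs
      · rfl
      · exact map_zero _)
    (by
      intro i j
      simp only [LinearMap.comp_apply, hPe]
      split_ifs
      · rw [Jint_ind, hmI]
        push_cast
        field_simp
      · exact map_zero _)
    (by
      intro k h0
      have h1 := congrArg (fun u => Jint (Pind (H1 S k) (H1_meas S k) u)) h0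
      simp only [map_sub, map_zero, Pind_ind] at h1
      rw [ind_congr _ (H1_meas S k) (Set.inter_self _),
        ind_congr _ MeasurableSet.empty (hdisj k), ind_empty, map_zero, Jint_ind, hmH1] at h1
      simp [hSC] at h1)
    hPw
    (by
      intro k
      simp only [LinearMap.comp_apply, hPw]
      rw [map_sub, Jint_ind, Jint_ind, hmH1, hmH2, sub_self])
    T
    (by
      intro u
      apply Lp.ext
      have hall : ∀ᵐ x ∂mu, ∀ i, (P i u : ℝ → ℂ) x = (II S i).indicator u x :=
        ae_all_iff.2 fun i => Pind_coe _ _ u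
      have hall2 : ∀ᵐ x ∂mu, ∀ i, (A i • P i u : E2) x = A i * P i u x :=
        ae_all_iff.2 fun i => Lp.coeFn_smul _ _
      have hall3 : ∀ᵐ x ∂mu, ∀ i, (ind (II S i) (II_meas S i) S : E2) x =
          (II S i).indicator (fun _ => (S : ℂ)) x :=
        ae_all_iff.2 fun i => ind_coe _ _ _
      have hall4 : ∀ᵐ x ∂mu, ∀ i, ((∑ j, B i j * (Jint ∘ₗ P j) u) •
          ind (II S i) (II_meas S i) S : E2) x = (∑ j, B i j * (Jint ∘ₗ P j) u) *
          ind (II S i) (II_meas S i) S x :=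
        ae_all_iff.2 fun i => Lp.coeFn_smul _ _
      filter_upwards [hT u, hall, hall2, hall3, hall4,
        Lp.coeFn_add (∑ i, A i • P i u) (∑ i, (∑ j, B i j * (Jint ∘ₗ P j) u) •
          ind (II S i) (II_meas S i) S),
        coe_sum Finset.univ fun i => A i • P i u,
        coe_sum Finset.univ fun i => (∑ j, B i j * (Jint ∘ₗ P j) u) •
          ind (II S i) (II_meas S i) S] with x h0 h1 h2 h3 h4 h5 h6 h7
      rw [h0, h5, Pi.add_apply, h6, h7, Tform_eq]
      congr 1
      · exact Finset.sum_congr rfl fun i _ => by rw [h2, h1]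
      · exact Finset.sum_congr rfl fun i _ => by rw [h4, h3]; rfl)
    ((algebraMap ℂ (E2 →L[ℂ] E2) z - T : E2 →L[ℂ] E2) : E2 →ₗ[ℂ] E2) z
    (by
      intro u
      simp [Algebra.algebraMap_eq_smul_one])
  rw [spectrum.mem_iff, ContinuousLinearMap.isUnit_iff_bijective]
  rw [ContinuousLinearMap.coe_coe] at key
  rw [key, Set.mem_union, Set.mem_setOf_eq, Set.mem_setOf_eq]
  tauto

end Stmt18
end
end

section
/- Let S ≥ 1, let χ_i be the indicator function of [(i−1)/S, i/S) ⊂ [0,1), let A_i, B_{ij} ∈ ℂ, and let 𝒜 : L²([0,1)) → L²([0,1)) be the operator 𝒜u(x) = A(x)u(x) + ∫₀¹ B(x,y)u(y)dy with A(x) = ∑_{i=1}^S A_i χ_i(x) and B(x,y) = S ∑_{i,j=1}^S B_{ij} χ_i(x)χ_j(y), and put 𝐀 = diag(A_1,...,A_S), 𝐁 = (B_{ij})_{i,j=1}^S. Then for every complex polynomial f, the operator f(𝒜) (obtained by substituting 𝒜 into f, with constant term times the identity operator) is given by f(𝒜)u(x) = χᵀ(x)f(𝐀)χ(x)u(x)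 + S ∫₀¹ χᵀ(x)(f(𝐀+𝐁) − f(𝐀))χ(y)u(y)dy, where χ(x) = (χ_1(x),...,χ_S(x))ᵀ and f(𝐀), f(𝐀+𝐁) are the matrix evaluations of f. -/
/-!
STATEMENT 19: Polynomial functional calculus for the operator
𝒜u(x) = A(x)u(x) + ∫₀¹B(x,y)u(y)dy on L²([0,1)) with S-step data:
f(𝒜)u(x) = χᵀ(x)f(𝐀)χ(x)u(x) + S∫₀¹ χᵀ(x)(f(𝐀+𝐁) − f(𝐀))χ(y)u(y)dy.
-/

open MeasureTheory Finset

noncomputable section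

namespace Stmt19

/-- The step function `χ_i`, the indicator of the `i`-th subinterval of `[0,1)`
of length `1/S` (the subintervals are indexed by `i = 0,...,S−1`). -/
def chi (S : ℕ) (i : Fin S) (x : ℝ) : ℂ :=
  if x ∈ Set.Ico ((i : ℝ) / S) (((i : ℝ) + 1) / S) then (1 : ℂ) else 0

/-- The pointwise formula of the operator
`𝒜u(x) = A(x)u(x) + ∫₀¹ B(x,y)u(y)dy` with the `S`-step multiplier
`A(x) = ∑_i A_i χ_i(x)` and the `S`-step kernel
`B(x,y) = S ∑_{i,j} B_{ij} χ_i(x) χ_j(y)`. -/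
def Tformula (S : ℕ) (A : Fin S → ℂ) (B : Fin S → Fin S → ℂ)
    (u : ℝ → ℂ) : ℝ → ℂ :=
  fun x => (∑ i, A i * chi S i x) * u x +
    ∫ y in Set.Ico (0 : ℝ) 1,
      ((S : ℂ) * ∑ i, ∑ j, B i j * chi S i x * chi S j y) * u y

abbrev mu01 : Measure ℝ := volume.restrict (Set.Ico (0 : ℝ) 1)

def cf (S : ℕ) (u : ℝ → ℂ) (j : Fin S) : ℂ := ∫ y, chi S j y * u y ∂mu01

lemma cell (S : ℕ) (hS : 1 ≤ S) (x : ℝ) (hx : x ∈ Set.Ico (0 : ℝ) 1) :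
    ∃ k : Fin S, ∀ i, chi S i x = if i = k then 1 else 0 := by
  have hS' : (0 : ℝ) < S := by exact_mod_cast hS
  have h0 : 0 ≤ x * S := mul_nonneg hx.1 hS'.le
  have hlt : ⌊x * S⌋₊ < S := by
    rw [Nat.floor_lt h0]
    nlinarith [hx.2]
  refine ⟨⟨⌊x * S⌋₊, hlt⟩, fun i => ?_⟩
  unfold chi
  have : x ∈ Set.Ico ((i : ℝ) / S) (((i : ℝ) + 1) / S) ↔ i = ⟨⌊x * S⌋₊, hlt⟩ := by
    rw [Set.mem_Ico, div_le_iff₀ hS', lt_div_iff₀ hS', ← Nat.floor_eq_iff h0, Fin.ext_iff]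
    exact eq_comm
  simp only [this]

lemma chi_meas (S : ℕ) (j : Fin S) : Measurable (chi S j) := by
  unfold chi
  exact Measurable.ite measurableSet_Ico measurable_const measurable_const

lemma chi_int (S : ℕ) (j : Fin S) (u : ℝ → ℂ) (hu : Integrable u mu01) :
    Integrable (fun y => chi S j y * u y) mu01 := by
  refine hu.bdd_mul (c := 1) (chi_meas S j).aestronglyMeasurable ?_
  refine Filter.Eventually.of_forall fun x => ?_
  unfold chi
  split_ifs <;> simp

lemma chi_integral (S : ℕ) (hS : 1 ≤ S) (j : Fin S) : ∫ y, chi S j y ∂mu01 = 1 / (S : ℂ) := by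
  have hS' : (0 : ℝ) < S := by exact_mod_cast hS
  have hsub : Set.Ico ((j : ℝ) / S) (((j : ℝ) + 1) / S) ⊆ Set.Ico (0 : ℝ) 1 := by
    apply Set.Ico_subset_Ico (by positivity)
    rw [div_le_one hS']
    exact_mod_cast j.2
  have : chi S j = (Set.Ico ((j : ℝ) / S) (((j : ℝ) + 1) / S)).indicator (fun _ => (1 : ℂ)) := by
    ext x
    simp [chi, Set.indicator]
  rw [this, integral_indicator measurableSet_Ico, Measure.restrict_restrict measurableSet_Ico,
    Set.inter_eq_left.2 hsub]
  have h2 : ((j : ℝ) + 1) / S - (j : ℝ) / S = 1 / S := by ring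
  simp only [integral_const, MeasurableSet.univ, measureReal_restrict_apply, Set.univ_inter]
  rw [Real.volume_real_Ico_of_le (by gcongr; linarith), h2]
  simp

lemma int_formula (S : ℕ) (M : Fin S → Fin S → ℂ) (k : Fin S) (g : Fin S → ℂ)
    (hg : ∀ i, g i = if i = k then 1 else 0) (u : ℝ → ℂ) (hu : Integrable u mu01) :
    ∫ y, ((S : ℂ) * ∑ i, ∑ j, g i * M i j * chi S j y) * u y ∂mu01
      = S * ∑ j, M k j * cf S u j := by
  have : ∀ y, ((S : ℂ) * ∑ i, ∑ j, g i * M i j * chi S j y) * u y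
      = S * ∑ j, M k j * (chi S j y * u y) := by
    intro y
    rw [mul_assoc]
    congr 1
    rw [Finset.sum_eq_single k (by intro b _ hb; simp [hg, hb]) (by simp), Finset.sum_mul]
    refine Finset.sum_congr rfl fun j _ => ?_
    simp [hg, mul_assoc]
  simp only [this]
  rw [integral_const_mul, integral_finsetSum _ fun j _ => (chi_int S j u hu).const_mul _]
  simp only [integral_const_mul, cf]

lemma Tform (S : ℕ) (A : Fin S → ℂ) (B : Fin S → Fin S → ℂ) (u : ℝ → ℂ)
    (hu : Integrable u mu01) (x : ℝ) (k : Fin S)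
    (hk : ∀ i, chi S i x = if i = k then 1 else 0) :
    Tformula S A B u x = A k * u x + S * ∑ j, B k j * cf S u j := by
  unfold Tformula
  congr 1
  · simp [hk]
  · rw [← int_formula S B k (fun i => chi S i x) hk u hu]
    simp only [mul_comm (B _ _)]

lemma cf_T (S : ℕ) (hS : 1 ≤ S) (A : Fin S → ℂ) (B : Fin S → Fin S → ℂ) (u v : ℝ → ℂ)
    (hu : Integrable u mu01) (hv : v =ᵐ[mu01] Tformula S A B u) (j : Fin S) :
    cf S v j = A j * cf S u j + ∑ l, B j l * cf S u l := by
  have hS' : (S : ℂ) ≠ 0 := by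
    have : S ≠ 0 := by omega
    exact_mod_cast this
  have h : (fun y => chi S j y * v y) =ᵐ[mu01] fun y => A j * (chi S j y * u y) +
      chi S j y * (S * ∑ l, B j l * cf S u l) := by
    filter_upwards [hv, ae_restrict_mem measurableSet_Ico] with x hx hm
    obtain ⟨k, hk⟩ := cell S hS x hm
    rw [hx, Tform S A B u hu x k hk, hk]
    split_ifs with h
    · subst h; ring
    · simp
  have hc : Integrable (fun y => chi S j y * (S * ∑ l, B j l * cf S u l)) mu01 :=
    chi_int S j _ (integrable_const _)
  unfold cf at h hc ⊢
  rw [integral_congr_ae h, integral_add ((chi_int S j u hu).const_mul _) hc,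
    integral_const_mul, integral_mul_const, chi_integral S hS]
  field_simp

lemma aeval_diag (S : ℕ) (A : Fin S → ℂ) (f : Polynomial ℂ) :
    Polynomial.aeval (Matrix.diagonal A) f = Matrix.diagonal (fun i => f.eval (A i)) := by
  induction f using Polynomial.induction_on' with
  | add p q hp hq => simp [hp, hq]
  | monomial n a =>
    rw [Polynomial.aeval_monomial, Matrix.diagonal_pow, Matrix.algebraMap_eq_diagonal,
      Matrix.diagonal_mul_diagonal]
    simp

lemma key (S : ℕ) (hS : 1 ≤ S)
    (A : Fin S → ℂ) (B : Fin S → Fin S → ℂ)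
    (T : Lp ℂ 2 mu01 →L[ℂ] Lp ℂ 2 mu01)
    (hT : ∀ u : Lp ℂ 2 mu01, (T u : ℝ → ℂ) =ᵐ[mu01] Tformula S A B (u : ℝ → ℂ))
    (f : Polynomial ℂ) :
    ∀ u : Lp ℂ 2 mu01, ∀ᵐ x ∂mu01, ∀ k : Fin S,
      (∀ i, chi S i x = if i = k then 1 else 0) →
      ((Polynomial.aeval T f) u : ℝ → ℂ) x = f.eval (A k) * (u : ℝ → ℂ) x +
        S * ∑ j, (Polynomial.aeval (Matrix.diagonal A + Matrix.of B) f -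
                    Polynomial.aeval (Matrix.diagonal A) f) k j * cf S u j := by
  have hint : ∀ u : Lp ℂ 2 mu01, Integrable (u : ℝ → ℂ) mu01 := fun u =>
    (Lp.memLp u).integrable one_le_two
  induction f using Polynomial.induction_on with
  | C a =>
    intro u
    have : Polynomial.aeval T (Polynomial.C a) u = a • u := by
      rw [Polynomial.aeval_C, Algebra.algebraMap_eq_smul_one]; rfl
    rw [this]
    filter_upwards [Lp.coeFn_smul a u] with x hx k hk
    rw [hx]
    simp
  | add p q hp hq =>
    intro u
    have : Polynomial.aeval T (p + q) u = Polynomial.aeval T p u + Polynomial.aeval T q u := by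
      rw [map_add]; rfl
    rw [this]
    filter_upwards [Lp.coeFn_add (Polynomial.aeval T p u) (Polynomial.aeval T q u), hp u, hq u]
      with x hx h1 h2 k hk
    rw [hx, Pi.add_apply, h1 k hk, h2 k hk]
    simp only [map_add, Polynomial.eval_add, Matrix.sub_apply, Matrix.add_apply, sub_mul, add_mul,
      Finset.sum_add_distrib, Finset.sum_sub_distrib]
    ring
  | monomial n a ih =>
    intro u
    rw [pow_succ, ← mul_assoc]
    generalize Polynomial.C a * Polynomial.X ^ n = p at ih ⊢
    have : Polynomial.aeval T (p * Polynomial.X) u = Polynomial.aeval T p (T u) := by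
      rw [map_mul, Polynomial.aeval_X]; rfl
    rw [this]
    filter_upwards [ih (T u), hT u] with x h1 h2 k hk
    rw [h1 k hk, h2, Tform S A B u (hint u) x k hk]
    simp only [cf_T S hS A B u (T u) (hint u) (hT u)]
    have e1 : ∀ j, A j * cf S u j + ∑ l, B j l * cf S u l
        = ((Matrix.diagonal A + Matrix.of B).mulVec (cf S u)) j := by
      intro j
      rw [Matrix.add_mulVec, Pi.add_apply, Matrix.mulVec_diagonal]
      rfl
    have e2 : ∀ (M : Matrix (Fin S) (Fin S) ℂ) (w : Fin S → ℂ),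
        ∑ j, M k j * w j = M.mulVec w k := fun M w => rfl
    have e3 : ∑ j, B k j * cf S u j = (Matrix.of B).mulVec (cf S u) k := rfl
    simp only [e1]
    rw [e2, e2, e3, Matrix.mulVec_mulVec, map_mul, map_mul, Polynomial.aeval_X, Polynomial.aeval_X]
    have e4 : Polynomial.aeval (Matrix.diagonal A + Matrix.of B) p *
          (Matrix.diagonal A + Matrix.of B) -
          Polynomial.aeval (Matrix.diagonal A) p * Matrix.diagonal A =
        (Polynomial.aeval (Matrix.diagonal A + Matrix.of B) p -
          Polynomial.aeval (Matrix.diagonal A) p) * (Matrix.diagonal A + Matrix.of B) +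
        Polynomial.aeval (Matrix.diagonal A) p * Matrix.of B := by
      noncomm_ring
    rw [e4, Matrix.add_mulVec, Pi.add_apply, ← Matrix.mulVec_mulVec (cf S u) (Polynomial.aeval (Matrix.diagonal A) p) (Matrix.of B), aeval_diag,
      Matrix.mulVec_diagonal, Polynomial.eval_mul, Polynomial.eval_X]
    ring

/-- For every complex polynomial `f`, the operator `f(𝒜)`
acts by `f(𝒜)u(x) = χᵀ(x)f(𝐀)χ(x)u(x) + S∫₀¹ χᵀ(x)(f(𝐀+𝐁) − f(𝐀))χ(y)u(y)dy`,
where `f(𝐀)`, `f(𝐀+𝐁)` are the matrix evaluations of `f`. -/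
theorem fredholm_step_polynomial_calculus (S : ℕ) (hS : 1 ≤ S)
    (A : Fin S → ℂ) (B : Fin S → Fin S → ℂ)
    (T : Lp ℂ 2 (volume.restrict (Set.Ico (0 : ℝ) 1)) →L[ℂ]
      Lp ℂ 2 (volume.restrict (Set.Ico (0 : ℝ) 1)))
    (hT : ∀ u : Lp ℂ 2 (volume.restrict (Set.Ico (0 : ℝ) 1)),
      (T u : ℝ → ℂ) =ᵐ[volume.restrict (Set.Ico (0 : ℝ) 1)]
        Tformula S A B (u : ℝ → ℂ))
    (f : Polynomial ℂ) :
    ∀ u : Lp ℂ 2 (volume.restrict (Set.Ico (0 : ℝ) 1)),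
      ((Polynomial.aeval T f) u : ℝ → ℂ)
        =ᵐ[volume.restrict (Set.Ico (0 : ℝ) 1)]
          fun x =>
            (∑ i, ∑ j, chi S i x *
                (Polynomial.aeval (Matrix.diagonal A) f) i j * chi S j x) *
              (u : ℝ → ℂ) x +
            ∫ y in Set.Ico (0 : ℝ) 1,
              ((S : ℂ) * ∑ i, ∑ j, chi S i x *
                  (Polynomial.aeval (Matrix.diagonal A + Matrix.of B) f -
                    Polynomial.aeval (Matrix.diagonal A) f) i j * chi S j y) *
                (u : ℝ → ℂ) y := by
  intro u
  have hu : Integrable (u : ℝ → ℂ) mu01 := (Lp.memLp u).integrable one_le_two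
  filter_upwards [key S hS A B T hT f u, ae_restrict_mem measurableSet_Ico] with x hx hm
  obtain ⟨k, hk⟩ := cell S hS x hm
  rw [hx k hk]
  refine congrArg₂ (· + ·) ?_ (int_formula S _ k (fun i => chi S i x) hk u hu).symm
  rw [aeval_diag]
  simp [hk, Matrix.diagonal_apply]

end Stmt19
end
end
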